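/- arXiv:1004.2298 — 3 statements merged into one kernel-verified Lean document; each statement's English description precedes it below -/
import Mathlib

section
/- Let r > 0 and ε > 0, and let u be a smooth constrained minimizer of H_ε on the open ball B_{2r} = {x ∈ ℝ^m : |x| < 2r}. Then for every smooth vector field ξ = (ξ¹, …, ξ^m) : ℝ^m → ℝ^m with compact support contained in B_{2r}, one has ∫_{B_{2r}} [ −(|Δu|² + ε|∇u|^{m+1}) div ξ + 4 ∑_{α,β} (Δu · ∂²_{αβ}u) ∂_α ξ^β + 2 ∑_β (Δu · ∂_β u) (∑_α ∂²_{αα} ξ^β) + ε(m+1) |∇u|^{m−1} ∑_{α,β} (∂_α u · ∂_β u) ∂_α ξ^β ] dx = 0. -/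
open MeasureTheory Filter Metric
open scoped ENNReal RealInnerProductSpace Topology

noncomputable section

/-- The `α`-th partial derivative of a map defined on `ℝ^m`. -/
def pderiv1 {m : ℕ} {F : Type*} [NormedAddCommGroup F] [NormedSpace ℝ F]
    (f : EuclideanSpace ℝ (Fin m) → F) (α : Fin m) (x : EuclideanSpace ℝ (Fin m)) : F :=
  fderiv ℝ f x (EuclideanSpace.single α 1)

/-- The second partial derivative `∂_α ∂_β f`. -/
def pderiv2 {m : ℕ} {F : Type*} [NormedAddCommGroup F] [NormedSpace ℝ F]
    (f : EuclideanSpace ℝ (Fin m) → F) (α β : Fin m) (x : EuclideanSpace ℝ (Fin m)) : F :=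
  pderiv1 (fun y => pderiv1 f β y) α x

/-- The (componentwise) Laplacian `Δf = ∑_α ∂²_{αα} f`. -/
def lap {m : ℕ} {F : Type*} [NormedAddCommGroup F] [NormedSpace ℝ F]
    (f : EuclideanSpace ℝ (Fin m) → F) (x : EuclideanSpace ℝ (Fin m)) : F :=
  ∑ α : Fin m, pderiv2 f α α x

/-- `|∇f|² = ∑_α |∂_α f|²`. -/
def gradSq {m : ℕ} {F : Type*} [NormedAddCommGroup F] [NormedSpace ℝ F]
    (f : EuclideanSpace ℝ (Fin m) → F) (x : EuclideanSpace ℝ (Fin m)) : ℝ :=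
  ∑ α : Fin m, ‖pderiv1 f α x‖ ^ 2

/-- `|∇f|`. -/
def gradNorm {m : ℕ} {F : Type*} [NormedAddCommGroup F] [NormedSpace ℝ F]
    (f : EuclideanSpace ℝ (Fin m) → F) (x : EuclideanSpace ℝ (Fin m)) : ℝ :=
  Real.sqrt (gradSq f x)

/-- The perturbed Hessian energy `H_ε(u, U) = ∫_U |Δu|² + ε |∇u|^{m+1} dx`
(as an extended nonnegative real). -/
def HEnergy {m n : ℕ} (eps : ℝ) (u : EuclideanSpace ℝ (Fin m) → EuclideanSpace ℝ (Fin (n + 1)))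
    (U : Set (EuclideanSpace ℝ (Fin m))) : ℝ≥0∞ :=
  ∫⁻ x in U, ENNReal.ofReal (‖lap u x‖ ^ 2 + eps * gradNorm u x ^ (m + 1))

/-- `u` is a smooth constrained minimizer of `H_ε` on the open set `U`: it is smooth and
sphere-valued on `U`, has finite energy, and minimizes `H_ε(·, U)` among smooth
sphere-valued maps agreeing with `u` outside a compact subset of `U`. -/
def IsHMinimizer {m n : ℕ} (eps : ℝ)
    (u : EuclideanSpace ℝ (Fin m) → EuclideanSpace ℝ (Fin (n + 1)))
    (U : Set (EuclideanSpace ℝ (Fin m))) : Prop :=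
  ContDiffOn ℝ (⊤ : ℕ∞) u U ∧ (∀ x ∈ U, ‖u x‖ = 1) ∧ HEnergy eps u U < ⊤ ∧
    ∀ v : EuclideanSpace ℝ (Fin m) → EuclideanSpace ℝ (Fin (n + 1)),
      ContDiffOn ℝ (⊤ : ℕ∞) v U → (∀ x ∈ U, ‖v x‖ = 1) →
      (∃ K, IsCompact K ∧ K ⊆ U ∧ ∀ x ∉ K, v x = u x) →
      HEnergy eps u U ≤ HEnergy eps v U

/-- The ε-stationarity (first-variation) identity on `U`. -/
def IsStationaryH {m n : ℕ} (eps : ℝ)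
    (u : EuclideanSpace ℝ (Fin m) → EuclideanSpace ℝ (Fin (n + 1)))
    (U : Set (EuclideanSpace ℝ (Fin m))) : Prop :=
  ∀ ξ : EuclideanSpace ℝ (Fin m) → EuclideanSpace ℝ (Fin m),
    ContDiff ℝ (⊤ : ℕ∞) ξ → HasCompactSupport ξ → tsupport ξ ⊆ U →
    ∫ x in U,
      (-((‖lap u x‖ ^ 2 + eps * gradNorm u x ^ (m + 1)) * (∑ α : Fin m, pderiv1 ξ α x α))
        + 4 * (∑ α : Fin m, ∑ β : Fin m, ⟪lap u x, pderiv2 u α β x⟫ * pderiv1 ξ α x β)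
        + 2 * (∑ β : Fin m, ⟪lap u x, pderiv1 u β x⟫ * (∑ α : Fin m, pderiv2 ξ α α x β))
        + eps * (m + 1) * gradNorm u x ^ (m - 1) *
            (∑ α : Fin m, ∑ β : Fin m, ⟪pderiv1 u α x, pderiv1 u β x⟫ * pderiv1 ξ α x β)) = 0

/-! The inner variation `u ∘ (id + t ξ)` stays sphere-valued and agrees with `u` off `tsupport ξ`,
so for small `t` it competes with `u` and its energy has a local minimum at `t = 0`. At `t = 0` the
derivative of `(Δ, ∇) (u ∘ (id + t ξ))` is the transport `ξ · ∇ (Δu, ∇u)` plus a commutator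
in which `ξ` is differentiated. If `h = ℓ (Δu, ∇u)` is the energy density, the transport term
contributes `ξ · ∇h = div (h ξ) - h div ξ`; the divergence integrates to zero, and what remains,
`-h div ξ` plus `dℓ` applied to the commutator, is the claimed integrand. -/

section IteratedFDeriv

variable {E F : Type*} [NormedAddCommGroup E] [NormedSpace ℝ E]
  [NormedAddCommGroup F] [NormedSpace ℝ F] {u : E → F} {x : E}

lemma differentiableAt_fderiv {n : WithTop ℕ∞} (hu : ContDiffAt ℝ n u x) (hn : 2 ≤ n) :
    DifferentiableAt ℝ (fderiv ℝ u) x :=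
  ((hu.of_le hn).fderiv_right (m := 1) le_rfl).differentiableAt one_ne_zero

lemma fderiv_fderiv_apply (hu : DifferentiableAt ℝ (fderiv ℝ u) x) (v w : E) :
    fderiv ℝ (fun y => fderiv ℝ u y v) x w = fderiv ℝ (fderiv ℝ u) x w v := by
  simp [fderiv_clm_apply hu (differentiableAt_const v)]

lemma fderiv_fderiv_fderiv_apply (hu : ContDiffAt ℝ 3 u x) (v w z : E) :
    fderiv ℝ (fun y => fderiv ℝ (fun y => fderiv ℝ u y v) y w) x z =
      fderiv ℝ (fderiv ℝ (fderiv ℝ u)) x z w v := by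
  have hnear : (fun y => fderiv ℝ (fun y => fderiv ℝ u y v) y w) =ᶠ[𝓝 x]
      fun y => fderiv ℝ (fderiv ℝ u) y w v := by
    filter_upwards [hu.eventually (by simp)] with y hy
    exact fderiv_fderiv_apply (differentiableAt_fderiv hy (by norm_num)) v w
  have hD2u : DifferentiableAt ℝ (fderiv ℝ (fderiv ℝ u)) x :=
    differentiableAt_fderiv (hu.fderiv_right (by norm_num)) le_rfl
  rw [hnear.fderiv_eq, fderiv_clm_apply (hD2u.clm_apply (differentiableAt_const w))
    (differentiableAt_const v), fderiv_clm_apply hD2u (differentiableAt_const w)]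
  simp

end IteratedFDeriv

section InnerVariation

variable {E F : Type*} [NormedAddCommGroup E] [NormedSpace ℝ E] {u : E → F} {ξ : E → E} {x : E}
  {t : ℝ}

/-- The inner variation `u ∘ (id + t ξ)` of a map `u` along a vector field `ξ`. -/
def innerVariation (u : E → F) (ξ : E → E) (t : ℝ) (x : E) : F := u (x + t • ξ x)

@[simp]
lemma innerVariation_zero (u : E → F) (ξ : E → E) : innerVariation u ξ 0 = u := by
  ext x
  simp [innerVariation]

lemma innerVariation_eq_of_notMem_tsupport (hx : x ∉ tsupport ξ) (u : E → F) (t : ℝ) :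
    innerVariation u ξ t x = u x := by
  simp [innerVariation, image_eq_zero_of_notMem_tsupport hx]

lemma hasDerivAt_add_smul (x v : E) (t : ℝ) : HasDerivAt (fun s : ℝ => x + s • v) v t := by
  simpa using ((hasDerivAt_id t).smul_const v).const_add x

lemma eventually_mapsTo_add_smul {U : Set E} (hU : IsOpen U) (hξ : Continuous ξ)
    (hcpt : HasCompactSupport ξ) (hξU : tsupport ξ ⊆ U) :
    ∀ᶠ t : ℝ in 𝓝 0, Set.MapsTo (fun x => x + t • ξ x) U U := by
  have hsupp : ∀ᶠ t : ℝ in 𝓝 0, ∀ x ∈ tsupport ξ, x + t • ξ x ∈ U :=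
    hcpt.isCompact.eventually_forall_of_forall_eventually fun x hx =>
      (continuous_snd.add
        (continuous_fst.smul (hξ.comp continuous_snd))).continuousAt.eventually_mem
        (hU.mem_nhds (by simpa using hξU hx))
  filter_upwards [hsupp] with t ht x hx
  by_cases hxξ : x ∈ tsupport ξ
  · exact ht x hxξ
  · simpa [image_eq_zero_of_notMem_tsupport hxξ] using hx

variable [NormedAddCommGroup F] [NormedSpace ℝ F]

lemma contDiffAt_uncurry_innerVariation {n : WithTop ℕ∞} (hu : ContDiffAt ℝ n u (x + t • ξ x))
    (hξ : ContDiffAt ℝ n ξ x) : ContDiffAt ℝ n (innerVariation u ξ).uncurry (t, x) :=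
  hu.comp (t, x) (contDiffAt_snd.add (contDiffAt_fst.smul (hξ.comp (t, x) contDiffAt_snd)))

lemma fderiv_innerVariation_apply (hu : DifferentiableAt ℝ u (x + t • ξ x))
    (hξ : DifferentiableAt ℝ ξ x) (v : E) :
    fderiv ℝ (innerVariation u ξ t) x v = fderiv ℝ u (x + t • ξ x) (v + t • fderiv ℝ ξ x v) := by
  have h := hu.hasFDerivAt.comp x ((hasFDerivAt_id x).add (hξ.hasFDerivAt.const_smul t))
  rw [HasFDerivAt.fderiv (f := innerVariation u ξ t) h]
  simp

lemma fderiv_fderiv_innerVariation_apply (hu : ContDiffAt ℝ 2 u (x + t • ξ x))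
    (hξ : ContDiffAt ℝ 2 ξ x) (v w : E) :
    fderiv ℝ (fun y => fderiv ℝ (innerVariation u ξ t) y v) x w =
      fderiv ℝ (fderiv ℝ u) (x + t • ξ x) (w + t • fderiv ℝ ξ x w) (v + t • fderiv ℝ ξ x v) +
        t • fderiv ℝ u (x + t • ξ x) (fderiv ℝ (fun y => fderiv ℝ ξ y v) x w) := by
  have hφ : HasFDerivAt (fun y => y + t • ξ y) (.id ℝ E + t • fderiv ℝ ξ x) x :=
    (hasFDerivAt_id x).add ((hξ.differentiableAt two_ne_zero).hasFDerivAt.const_smul t)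
  have hfirst : (fun y => fderiv ℝ (innerVariation u ξ t) y v) =ᶠ[𝓝 x]
      fun y => fderiv ℝ u (y + t • ξ y) (v + t • fderiv ℝ ξ y v) := by
    filter_upwards [hφ.continuousAt.eventually (hu.eventually (by simp)), hξ.eventually (by simp)]
      with y huy hξy
    exact fderiv_innerVariation_apply (huy.differentiableAt two_ne_zero)
      (hξy.differentiableAt two_ne_zero) v
  have hDu : HasFDerivAt (fun y => fderiv ℝ u (y + t • ξ y)) _ x :=
    (differentiableAt_fderiv hu le_rfl).hasFDerivAt.comp x hφ
  have hdir : HasFDerivAt (fun y => v + t • fderiv ℝ ξ y v)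
      (t • fderiv ℝ (fun y => fderiv ℝ ξ y v) x) x :=
    (((differentiableAt_fderiv hξ le_rfl).clm_apply
      (differentiableAt_const v)).hasFDerivAt.const_smul t).const_add v
  rw [hfirst.fderiv_eq, (hDu.clm_apply hdir).fderiv]
  simp [add_comm]

lemma hasDerivAt_fderiv_innerVariation_apply (hu : ContDiffAt ℝ 2 u x)
    (hξ : DifferentiableAt ℝ ξ x) (v : E) :
    HasDerivAt (fun t => fderiv ℝ (innerVariation u ξ t) x v)
      (fderiv ℝ (fun y => fderiv ℝ u y v) x (ξ x) + fderiv ℝ u x (fderiv ℝ ξ x v)) 0 := by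
  have hpath := hasDerivAt_add_smul x (ξ x) 0
  have hfirst : (fun t => fderiv ℝ (innerVariation u ξ t) x v) =ᶠ[𝓝 0]
      fun t : ℝ => fderiv ℝ u (x + t • ξ x) (v + t • fderiv ℝ ξ x v) := by
    filter_upwards [hpath.continuousAt.eventually (by simpa using hu.eventually (by simp))]
      with t hut
    exact fderiv_innerVariation_apply (hut.differentiableAt two_ne_zero) hξ v
  have hDu := HasFDerivAt.comp_hasDerivAt_of_eq 0
    (differentiableAt_fderiv hu le_rfl).hasFDerivAt hpath (by simp)
  refine ((hDu.clm_apply (hasDerivAt_add_smul v (fderiv ℝ ξ x v) 0)).congr_of_eventuallyEq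
    hfirst).congr_deriv ?_
  simp [fderiv_fderiv_apply (differentiableAt_fderiv hu le_rfl)]

lemma hasDerivAt_fderiv_fderiv_innerVariation_apply (hu : ContDiffAt ℝ 3 u x)
    (hξ : ContDiffAt ℝ 2 ξ x) (v w : E) :
    HasDerivAt (fun t => fderiv ℝ (fun y => fderiv ℝ (innerVariation u ξ t) y v) x w)
      (fderiv ℝ (fun y => fderiv ℝ (fun y => fderiv ℝ u y v) y w) x (ξ x) +
        (fderiv ℝ (fderiv ℝ u) x (fderiv ℝ ξ x w) v + fderiv ℝ (fderiv ℝ u) x w (fderiv ℝ ξ x v) +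
          fderiv ℝ u x (fderiv ℝ (fun y => fderiv ℝ ξ y v) x w))) 0 := by
  have hu2 : ContDiffAt ℝ 2 u x := hu.of_le (by norm_num)
  have hpath := hasDerivAt_add_smul x (ξ x) 0
  have hsecond : (fun t => fderiv ℝ (fun y => fderiv ℝ (innerVariation u ξ t) y v) x w) =ᶠ[𝓝 0]
      fun t : ℝ =>
        fderiv ℝ (fderiv ℝ u) (x + t • ξ x) (w + t • fderiv ℝ ξ x w) (v + t • fderiv ℝ ξ x v) +
          t • fderiv ℝ u (x + t • ξ x) (fderiv ℝ (fun y => fderiv ℝ ξ y v) x w) := by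
    filter_upwards [hpath.continuousAt.eventually (by simpa using hu2.eventually (by simp))]
      with t hut
    exact fderiv_fderiv_innerVariation_apply hut hξ v w
  have hDu := HasFDerivAt.comp_hasDerivAt_of_eq 0
    (differentiableAt_fderiv hu2 le_rfl).hasFDerivAt hpath (by simp)
  have hD2u := HasFDerivAt.comp_hasDerivAt_of_eq 0
    (differentiableAt_fderiv (hu.fderiv_right (m := 2) (by norm_num)) le_rfl).hasFDerivAt
    hpath (by simp)
  have hhess := (hD2u.clm_apply (hasDerivAt_add_smul w (fderiv ℝ ξ x w) 0)).clm_apply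
    (hasDerivAt_add_smul v (fderiv ℝ ξ x v) 0)
  have hgrad := (hasDerivAt_id (0 : ℝ)).smul (hDu.clm_apply
    (hasDerivAt_const 0 (fderiv ℝ (fun y => fderiv ℝ ξ y v) x w)))
  refine ((hhess.add hgrad).congr_of_eventuallyEq hsecond).congr_deriv ?_
  simp [fderiv_fderiv_fderiv_apply hu, add_assoc]

end InnerVariation

section PartialDerivatives

variable {m : ℕ} {F : Type*} [NormedAddCommGroup F] [NormedSpace ℝ F]
  {f : EuclideanSpace ℝ (Fin m) → F} {x : EuclideanSpace ℝ (Fin m)}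

lemma tsupport_pderiv1_subset (f : EuclideanSpace ℝ (Fin m) → F) (α : Fin m) :
    tsupport (pderiv1 f α) ⊆ tsupport f :=
  tsupport_fderiv_apply_subset ℝ _

lemma lap_eq_zero_of_notMem_tsupport (hx : x ∉ tsupport f) : lap f x = 0 :=
  Finset.sum_eq_zero fun α _ => image_eq_zero_of_notMem_tsupport fun h =>
    hx (tsupport_pderiv1_subset f α (tsupport_pderiv1_subset (pderiv1 f α) α h))

lemma clm_apply_eq_sum_single (L : EuclideanSpace ℝ (Fin m) →L[ℝ] F)
    (v : EuclideanSpace ℝ (Fin m)) : L v = ∑ β, v β • L (EuclideanSpace.single β 1) := by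
  conv_lhs => rw [← (EuclideanSpace.basisFun (Fin m) ℝ).sum_repr v]
  simp

lemma pderiv1_fderiv_apply_single (hf : DifferentiableAt ℝ (fderiv ℝ f) x) (α β : Fin m) :
    pderiv1 (fderiv ℝ f) α x (EuclideanSpace.single β 1) = pderiv2 f α β x :=
  (fderiv_fderiv_apply hf _ _).symm

lemma contDiffAt_uncurry_pderiv1 {P : Type*} [NormedAddCommGroup P] [NormedSpace ℝ P]
    {Φ : P → EuclideanSpace ℝ (Fin m) → F} {p : P} {k n : WithTop ℕ∞}
    (hΦ : ContDiffAt ℝ n Φ.uncurry (p, x)) (hk : k + 1 ≤ n) (α : Fin m) :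
    ContDiffAt ℝ k (fun q => pderiv1 (Φ q) α).uncurry (p, x) := by
  have hΦ' : ContDiffAt ℝ n (fun q : P × EuclideanSpace ℝ (Fin m) => Φ q.1).uncurry
      ((p, x), (p, x).2) :=
    hΦ.comp ((p, x), x) ((contDiffAt_fst.comp _ contDiffAt_fst).prodMk contDiffAt_snd)
  exact (hΦ'.fderiv contDiffAt_snd hk).clm_apply contDiffAt_const

/-- The pair `(Δf, ∇f)` of derivatives entering the energy density. The gradient lives in the
Hilbert sum of `m` copies of `F`, so that its norm is `gradNorm f`. -/
def lapGrad (f : EuclideanSpace ℝ (Fin m) → F) (x : EuclideanSpace ℝ (Fin m)) :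
    F × PiLp 2 (fun _ : Fin m => F) :=
  (lap f x, WithLp.toLp 2 fun α => pderiv1 f α x)

lemma norm_lapGrad_snd (f : EuclideanSpace ℝ (Fin m) → F) (x : EuclideanSpace ℝ (Fin m)) :
    ‖(lapGrad f x).2‖ = gradNorm f x :=
  PiLp.norm_eq_of_L2 _

lemma lapGrad_congr {g : EuclideanSpace ℝ (Fin m) → F} (h : f =ᶠ[𝓝 x] g) :
    lapGrad f x = lapGrad g x := by
  have h1 : ∀ α, pderiv1 f α =ᶠ[𝓝 x] pderiv1 g α := fun α =>
    h.fderiv.fun_comp fun L => L (EuclideanSpace.single α 1)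
  have h2 : ∀ α, pderiv2 f α α x = pderiv2 g α α x := fun α => by
    rw [pderiv2, pderiv1, (h1 α).fderiv_eq, pderiv2, pderiv1]
  simp only [lapGrad, lap, h2, (h1 _).eq_of_nhds]

lemma contDiffAt_uncurry_lapGrad {P : Type*} [NormedAddCommGroup P] [NormedSpace ℝ P]
    {Φ : P → EuclideanSpace ℝ (Fin m) → F} {p : P} {k n : WithTop ℕ∞}
    (hΦ : ContDiffAt ℝ n Φ.uncurry (p, x)) (hk : k + 1 + 1 ≤ n) :
    ContDiffAt ℝ k (fun q => lapGrad (Φ q)).uncurry (p, x) := by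
  have h1 := fun α => contDiffAt_uncurry_pderiv1 hΦ hk α
  have h2 := fun α => contDiffAt_uncurry_pderiv1 (h1 α) le_rfl α
  exact (ContDiffAt.sum fun α _ => h2 α).prodMk
    (contDiffAt_piLp' 2 fun α => (h1 α).of_le le_self_add)

lemma contDiffAt_lapGrad {k n : WithTop ℕ∞} (hf : ContDiffAt ℝ n f x) (hk : k + 1 + 1 ≤ n) :
    ContDiffAt ℝ k (lapGrad f) x :=
  (contDiffAt_uncurry_lapGrad (Φ := fun _ : ℝ => f) (p := 0)
    (hf.comp ((0 : ℝ), x) contDiffAt_snd) hk).comp x (contDiffAt_const.prodMk contDiffAt_id)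

lemma fderiv_lapGrad_apply (hf : ContDiffAt ℝ 3 f x) (v : EuclideanSpace ℝ (Fin m)) :
    fderiv ℝ (lapGrad f) x v =
      (∑ α, fderiv ℝ (pderiv2 f α α) x v, WithLp.toLp 2 fun α => fderiv ℝ (pderiv1 f α) x v) := by
  have hf1 : ∀ α, ContDiffAt ℝ 2 (pderiv1 f α) x := fun α =>
    (hf.fderiv_right (by norm_num)).clm_apply contDiffAt_const
  have hf2 : ∀ α, ContDiffAt ℝ 1 (pderiv2 f α α) x := fun α =>
    ((hf1 α).fderiv_right (by norm_num)).clm_apply contDiffAt_const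
  have hlap : HasFDerivAt (lap f) (∑ α, fderiv ℝ (pderiv2 f α α) x) x :=
    HasFDerivAt.fun_sum fun α _ => ((hf2 α).differentiableAt one_ne_zero).hasFDerivAt
  have hgrad : HasFDerivAt (fun y => WithLp.toLp 2 fun α => pderiv1 f α y) _ x :=
    (PiLp.hasFDerivAt_toLp (𝕜 := ℝ) 2 _).comp x (hasFDerivAt_pi.2 fun α =>
      ((hf1 α).differentiableAt two_ne_zero).hasFDerivAt)
  rw [HasFDerivAt.fderiv (f := lapGrad f) (hlap.prodMk hgrad)]
  ext <;> simp

/-- The part of the derivative of `t ↦ (Δ, ∇) (u ∘ (id + t ξ))` at `t = 0` that is not transport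
along `ξ`, i.e. the commutator `[(Δ, ∇), ξ · ∇] u`. -/
def lapGradCommutator (u : EuclideanSpace ℝ (Fin m) → F)
    (ξ : EuclideanSpace ℝ (Fin m) → EuclideanSpace ℝ (Fin m)) (x : EuclideanSpace ℝ (Fin m)) :
    F × PiLp 2 (fun _ : Fin m => F) :=
  ((2 : ℝ) • ∑ α, pderiv1 (fderiv ℝ u) α x (pderiv1 ξ α x) + fderiv ℝ u x (lap ξ x),
    WithLp.toLp 2 fun α => fderiv ℝ u x (pderiv1 ξ α x))

variable {u : EuclideanSpace ℝ (Fin m) → F}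
  {ξ : EuclideanSpace ℝ (Fin m) → EuclideanSpace ℝ (Fin m)}

lemma lapGradCommutator_eq_zero_of_notMem_tsupport (hx : x ∉ tsupport ξ) :
    lapGradCommutator u ξ x = 0 := by
  have h1 : ∀ α, pderiv1 ξ α x = 0 := fun α =>
    image_eq_zero_of_notMem_tsupport fun h => hx (tsupport_pderiv1_subset ξ α h)
  ext <;> simp [lapGradCommutator, h1, lap_eq_zero_of_notMem_tsupport hx]

lemma hasDerivAt_lapGrad_innerVariation (hu : ContDiffAt ℝ 3 u x) (hξ : ContDiffAt ℝ 2 ξ x) :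
    HasDerivAt (fun t => lapGrad (innerVariation u ξ t) x)
      (fderiv ℝ (lapGrad u) x (ξ x) + lapGradCommutator u ξ x) 0 := by
  have hu2 : ContDiffAt ℝ 2 u x := hu.of_le (by norm_num)
  have hsymm : IsSymmSndFDerivAt ℝ u x := hu2.isSymmSndFDerivAt (by simp)
  have hgrad := fun α => hasDerivAt_fderiv_innerVariation_apply hu2
    (hξ.differentiableAt two_ne_zero) (EuclideanSpace.single α 1)
  have hlap := HasDerivAt.fun_sum fun α (_ : α ∈ Finset.univ) =>
    hasDerivAt_fderiv_fderiv_innerVariation_apply hu hξ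
      (EuclideanSpace.single α 1) (EuclideanSpace.single α 1)
  refine (hlap.prodMk ((PiLp.hasFDerivAt_toLp (𝕜 := ℝ) 2 _).comp_hasDerivAt 0
    (hasDerivAt_pi.2 hgrad))).congr_deriv ?_
  rw [fderiv_lapGrad_apply hu]
  ext1
  · simp only [lapGradCommutator, Prod.fst_add, hsymm _ (EuclideanSpace.single _ _),
      Finset.sum_add_distrib, lap, map_sum, two_smul]
    rfl
  · rfl

end PartialDerivatives

section IntegralOverCompact

variable {X : Type*} [MeasurableSpace X] {μ : Measure X} {K : Set X}

lemma integrableOn_deriv_and_hasDerivAt_setIntegral [NormedAddCommGroup X] [NormedSpace ℝ X]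
    [OpensMeasurableSpace X] [IsFiniteMeasureOnCompacts μ] {E : Type*} [NormedAddCommGroup E]
    [NormedSpace ℝ E] {g : ℝ → X → E} {t₀ : ℝ} (hK : IsCompact K)
    (hg : ∀ x ∈ K, ContDiffAt ℝ 1 g.uncurry (t₀, x)) :
    IntegrableOn (fun x => deriv (g · x) t₀) K μ ∧
      HasDerivAt (fun t => ∫ x in K, g t x ∂μ) (∫ x in K, deriv (g · x) t₀ ∂μ) t₀ := by
  have hderiv {t : ℝ} {x : X} (h : ContDiffAt ℝ 1 g.uncurry (t, x)) :
      HasDerivAt (g · x) (fderiv ℝ g.uncurry (t, x) (1, 0)) t :=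
    HasFDerivAt.comp_hasDerivAt (f := fun s => (s, x)) t
      (h.differentiableAt one_ne_zero).hasFDerivAt ((hasDerivAt_id t).prodMk (hasDerivAt_const t x))
  have hslice {t : ℝ} (h : ∀ x ∈ K, ContDiffAt ℝ 1 g.uncurry (t, x)) : ContinuousOn (g t) K :=
    fun x hx => ((h x hx).continuousAt.comp (f := (t, ·))
      (Continuous.prodMk_right t).continuousAt).continuousWithinAt
  have hcont {x : X} (hx : x ∈ K) :
      ContinuousAt (fun z => fderiv ℝ g.uncurry z (1, 0)) (t₀, x) :=
    ((hg x hx).continuousAt_fderiv one_ne_zero).clm_apply continuousAt_const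
  have hderiv_cont : ContinuousOn (fun x => fderiv ℝ g.uncurry (t₀, x) (1, 0)) K :=
    fun x hx => ((hcont hx).comp (f := (t₀, ·))
      (Continuous.prodMk_right t₀).continuousAt).continuousWithinAt
  obtain ⟨C, hC⟩ := hK.exists_bound_of_continuousOn hderiv_cont
  have hnear : ∀ᶠ t in 𝓝 t₀, ∀ x ∈ K, ContDiffAt ℝ 1 g.uncurry (t, x) ∧
      ‖fderiv ℝ g.uncurry (t, x) (1, 0)‖ ≤ C + 1 :=
    hK.eventually_forall_of_forall_eventually fun x hx => ((hg x hx).eventually (by simp)).and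
      ((hcont hx).norm.eventually_le_const (by linarith [hC x hx]))
  have hmem : ∀ᵐ x ∂μ.restrict K, x ∈ K := ae_restrict_mem hK.measurableSet
  have hderiv₀ : Set.EqOn (fun x => deriv (g · x) t₀)
      (fun x => fderiv ℝ g.uncurry (t₀, x) (1, 0)) K :=
    fun x hx => (hderiv (hg x hx)).deriv
  rw [integrableOn_congr_fun hderiv₀ hK.measurableSet,
    setIntegral_congr_fun hK.measurableSet hderiv₀]
  exact hasDerivAt_integral_of_dominated_loc_of_deriv_le (F := g)
    (F' := fun t x => fderiv ℝ g.uncurry (t, x) (1, 0)) hnear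
    (hnear.mono fun t ht => (hslice fun x hx => (ht x hx).1).aestronglyMeasurable_of_isCompact hK
      hK.measurableSet)
    ((hslice hg).integrableOn_compact hK)
    (hderiv_cont.aestronglyMeasurable_of_isCompact hK hK.measurableSet)
    (hmem.mono fun x hx t ht => (ht x hx).2)
    ((continuousOn_const (c := C + 1)).integrableOn_compact hK)
    (hmem.mono fun x hx t ht => hderiv (ht x hx).1)

lemma setIntegral_le_of_setLIntegral_le_of_eqOn_sdiff {U : Set X} {f g : X → ℝ}
    (hK : MeasurableSet K) (hKU : K ⊆ U) (hU : MeasurableSet U) (hf : 0 ≤ f) (hg : 0 ≤ g)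
    (hfi : IntegrableOn f K μ) (hgi : IntegrableOn g K μ) (heq : Set.EqOn f g (U \ K))
    (hfin : ∫⁻ x in U, ENNReal.ofReal (f x) ∂μ ≠ ∞)
    (hle : ∫⁻ x in U, ENNReal.ofReal (f x) ∂μ ≤ ∫⁻ x in U, ENNReal.ofReal (g x) ∂μ) :
    ∫ x in K, f x ∂μ ≤ ∫ x in K, g x ∂μ := by
  have houtside : ∫⁻ x in U \ K, ENNReal.ofReal (f x) ∂μ =
      ∫⁻ x in U \ K, ENNReal.ofReal (g x) ∂μ :=
    setLIntegral_congr_fun (hU.diff hK) fun x hx => by simp only [heq hx]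
  rw [← lintegral_inter_add_sdiff _ U hK, Set.inter_eq_self_of_subset_right hKU] at hfin
  rw [← lintegral_inter_add_sdiff _ U hK, ← lintegral_inter_add_sdiff _ U hK,
    Set.inter_eq_self_of_subset_right hKU, ← houtside,
    ENNReal.add_le_add_iff_right (ENNReal.add_ne_top.1 hfin).2,
    ← ofReal_integral_eq_lintegral_ofReal hfi (.of_forall hf),
    ← ofReal_integral_eq_lintegral_ofReal hgi (.of_forall hg)] at hle
  exact (ENNReal.ofReal_le_ofReal_iff (integral_nonneg hg)).1 hle

lemma integrable_mul_of_continuousOn_tsupport [TopologicalSpace X] [R1Space X]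
    [OpensMeasurableSpace X] [IsFiniteMeasureOnCompacts μ] {f g : X → ℝ}
    (hf : ContinuousOn f (tsupport g)) (hg : Continuous g) (hcpt : HasCompactSupport g) :
    Integrable (fun x => f x * g x) μ :=
  (integrableOn_iff_integrable_of_support_subset <|
    (Function.support_mul_subset_right f g).trans (subset_tsupport g)).1 <|
    (hf.mul hg.continuousOn).integrableOn_compact' hcpt (isClosed_tsupport g).measurableSet

end IntegralOverCompact

section IntegrationByParts

variable {E : Type*} [NormedAddCommGroup E] [NormedSpace ℝ E] [MeasurableSpace E] [BorelSpace E]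
  {μ : Measure E} {f g : E → ℝ}

lemma integrable_fderiv_apply_mul_of_tsupport [IsFiniteMeasureOnCompacts μ]
    (hf : ∀ x ∈ tsupport g, ContDiffAt ℝ 1 f x) (hg : Continuous g) (hcpt : HasCompactSupport g)
    (v : E) : Integrable (fun x => fderiv ℝ f x v * g x) μ :=
  integrable_mul_of_continuousOn_tsupport (fun x hx => (((hf x hx).continuousAt_fderiv
    one_ne_zero).clm_apply continuousAt_const).continuousWithinAt) hg hcpt

lemma integrable_mul_fderiv_apply_of_tsupport [IsFiniteMeasureOnCompacts μ]
    (hf : ContinuousOn f (tsupport g)) (hg : ContDiff ℝ 1 g) (hcpt : HasCompactSupport g)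
    (v : E) : Integrable (fun x => f x * fderiv ℝ g x v) μ :=
  integrable_mul_of_continuousOn_tsupport (hf.mono (tsupport_fderiv_apply_subset ℝ v))
    ((hg.continuous_fderiv one_ne_zero).clm_apply continuous_const) (hcpt.fderiv_apply ℝ v)

lemma integral_fderiv_apply_mul_add_of_tsupport [FiniteDimensional ℝ E] [μ.IsAddHaarMeasure]
    (hf : ∀ x ∈ tsupport g, ContDiffAt ℝ 1 f x) (hg : ContDiff ℝ 1 g)
    (hcpt : HasCompactSupport g) (v : E) :
    ∫ x, (fderiv ℝ f x v * g x + f x * fderiv ℝ g x v) ∂μ = 0 := by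
  have hf_cont : ContinuousOn f (tsupport g) :=
    fun x hx => (hf x hx).continuousAt.continuousWithinAt
  have hint := integrable_fderiv_apply_mul_of_tsupport (μ := μ) hf hg.continuous hcpt v
  have hint' := integrable_mul_fderiv_apply_of_tsupport (μ := μ) hf_cont hg hcpt v
  rw [integral_add hint hint', integral_mul_fderiv_eq_neg_fderiv_mul_of_integrable hint hint'
    (integrable_mul_of_continuousOn_tsupport hf_cont hg.continuous hcpt)
    (fun x hx => (hf x hx).differentiableAt one_ne_zero)
    fun x _ => hg.differentiable one_ne_zero x, add_neg_cancel]

end IntegrationByParts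

section Divergence

variable {m : ℕ} {ξ : EuclideanSpace ℝ (Fin m) → EuclideanSpace ℝ (Fin m)}
  {x : EuclideanSpace ℝ (Fin m)}

/-- The divergence `∑_α ∂_α ξ^α` of a vector field on `ℝ^m`. -/
def divergence (ξ : EuclideanSpace ℝ (Fin m) → EuclideanSpace ℝ (Fin m))
    (x : EuclideanSpace ℝ (Fin m)) : ℝ := ∑ α, pderiv1 ξ α x α

lemma divergence_eq_zero_of_notMem_tsupport (hx : x ∉ tsupport ξ) : divergence ξ x = 0 :=
  Finset.sum_eq_zero fun α _ => by
    rw [image_eq_zero_of_notMem_tsupport fun h => hx (tsupport_pderiv1_subset ξ α h),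
      PiLp.zero_apply]

lemma pderiv1_coord (hξ : DifferentiableAt ℝ ξ x) (α β : Fin m) :
    pderiv1 (fun y => ξ y β) α x = pderiv1 ξ α x β := by
  have h := (EuclideanSpace.proj (𝕜 := ℝ) β).hasFDerivAt.comp x hξ.hasFDerivAt
  rw [pderiv1, HasFDerivAt.fderiv (f := fun y => ξ y β) h]
  rfl

lemma tsupport_coord_subset (ξ : EuclideanSpace ℝ (Fin m) → EuclideanSpace ℝ (Fin m))
    (β : Fin m) : tsupport (fun y => ξ y β) ⊆ tsupport ξ :=
  closure_mono fun y hy hy0 => hy (by simp [hy0])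

lemma fderiv_apply_add_mul_divergence_eq_sum (hξ : DifferentiableAt ℝ ξ x)
    (h : EuclideanSpace ℝ (Fin m) → ℝ) :
    fderiv ℝ h x (ξ x) + h x * divergence ξ x =
      ∑ β, (fderiv ℝ h x (EuclideanSpace.single β 1) * ξ x β +
        h x * fderiv ℝ (fun y => ξ y β) x (EuclideanSpace.single β 1)) := by
  rw [clm_apply_eq_sum_single, divergence, Finset.mul_sum, ← Finset.sum_add_distrib]
  refine Finset.sum_congr rfl fun β _ => ?_
  rw [← pderiv1_coord hξ, pderiv1, smul_eq_mul, mul_comm]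

lemma integrable_and_integral_fderiv_apply_add_mul_divergence {h : EuclideanSpace ℝ (Fin m) → ℝ}
    (hh : ∀ x ∈ tsupport ξ, ContDiffAt ℝ 1 h x) (hξ : ContDiff ℝ 1 ξ)
    (hcpt : HasCompactSupport ξ) :
    Integrable (fun x => fderiv ℝ h x (ξ x) + h x * divergence ξ x) ∧
      ∫ x, (fderiv ℝ h x (ξ x) + h x * divergence ξ x) = 0 := by
  simp_rw [fun x => fderiv_apply_add_mul_divergence_eq_sum (hξ.differentiable one_ne_zero x) h]
  have hcoord (β : Fin m) : ContDiff ℝ 1 fun x => ξ x β := contDiff_euclidean.1 hξ β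
  have hcoord_cpt (β : Fin m) : HasCompactSupport fun x => ξ x β :=
    hcpt.of_isClosed_subset (isClosed_tsupport _) (tsupport_coord_subset ξ β)
  have hh_coord (β : Fin m) : ∀ x ∈ tsupport fun x => ξ x β, ContDiffAt ℝ 1 h x :=
    fun x hx => hh x (tsupport_coord_subset ξ β hx)
  have hint (β : Fin m) : Integrable fun x =>
      fderiv ℝ h x (EuclideanSpace.single β 1) * ξ x β +
        h x * fderiv ℝ (fun y => ξ y β) x (EuclideanSpace.single β 1) :=
    (integrable_fderiv_apply_mul_of_tsupport (hh_coord β) (hcoord β).continuous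
      (hcoord_cpt β) _).add (integrable_mul_fderiv_apply_of_tsupport
        (fun x hx => (hh_coord β x hx).continuousAt.continuousWithinAt) (hcoord β)
        (hcoord_cpt β) _)
  refine ⟨integrable_finsetSum _ fun β _ => hint β, ?_⟩
  rw [integral_finsetSum _ fun β _ => hint β]
  exact Finset.sum_eq_zero fun β _ =>
    integral_fderiv_apply_mul_add_of_tsupport (hh_coord β) (hcoord β) (hcoord_cpt β) _

end Divergence

section Stationarity

variable {m : ℕ} {F : Type*} [NormedAddCommGroup F] [NormedSpace ℝ F]
  {ℓ : F × PiLp 2 (fun _ : Fin m => F) → ℝ} {u : EuclideanSpace ℝ (Fin m) → F}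
  {ξ : EuclideanSpace ℝ (Fin m) → EuclideanSpace ℝ (Fin m)} {x : EuclideanSpace ℝ (Fin m)}
  {U : Set (EuclideanSpace ℝ (Fin m))}

/-- The energy `∫_U ℓ(Δu, ∇u) dx` of a nonnegative Lagrangian `ℓ`, as an extended nonnegative
real. -/
def lagrangianEnergy (ℓ : F × PiLp 2 (fun _ : Fin m => F) → ℝ) (u : EuclideanSpace ℝ (Fin m) → F)
    (U : Set (EuclideanSpace ℝ (Fin m))) : ℝ≥0∞ :=
  ∫⁻ x in U, ENNReal.ofReal (ℓ (lapGrad u x))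

lemma hasDerivAt_lagrangian_innerVariation (hℓ : Differentiable ℝ ℓ) (hu : ContDiffAt ℝ 3 u x)
    (hξ : ContDiffAt ℝ 2 ξ x) :
    HasDerivAt (fun t => ℓ (lapGrad (innerVariation u ξ t) x))
      (fderiv ℝ (fun y => ℓ (lapGrad u y)) x (ξ x) +
        fderiv ℝ ℓ (lapGrad u x) (lapGradCommutator u ξ x)) 0 := by
  have hcomp : fderiv ℝ (fun y => ℓ (lapGrad u y)) x =
      (fderiv ℝ ℓ (lapGrad u x)).comp (fderiv ℝ (lapGrad u) x) :=
    fderiv_comp x (hℓ _) ((contDiffAt_lapGrad hu (k := 1) (by norm_num)).differentiableAt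
      one_ne_zero)
  rw [hcomp, ContinuousLinearMap.comp_apply, ← map_add]
  exact (hℓ _).hasFDerivAt.comp_hasDerivAt_of_eq 0 (hasDerivAt_lapGrad_innerVariation hu hξ)
    (by simp)

lemma contDiffAt_uncurry_lagrangian_innerVariation (hℓ : ContDiff ℝ 1 ℓ)
    (hu : ContDiffAt ℝ 3 u x) (hξ : ContDiffAt ℝ 3 ξ x) :
    ContDiffAt ℝ 1 (fun t y => ℓ (lapGrad (innerVariation u ξ t) y)).uncurry (0, x) :=
  hℓ.contDiffAt.comp (0, x) (contDiffAt_uncurry_lapGrad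
    (contDiffAt_uncurry_innerVariation (by simpa using hu) hξ) (by norm_num))

lemma lapGrad_innerVariation_of_notMem_tsupport (hx : x ∉ tsupport ξ)
    (u : EuclideanSpace ℝ (Fin m) → F) (t : ℝ) : lapGrad (innerVariation u ξ t) x = lapGrad u x :=
  lapGrad_congr <| (isClosed_tsupport ξ).isOpen_compl.eventually_mem hx |>.mono fun _ hy =>
    innerVariation_eq_of_notMem_tsupport hy u t

lemma isLocalMin_setIntegral_tsupport_of_isLocalMin_lagrangianEnergy (hℓ : ContDiff ℝ 1 ℓ)
    (hℓ0 : 0 ≤ ℓ) (hξ : ContDiff ℝ 3 ξ) (hcpt : HasCompactSupport ξ) (hU : MeasurableSet U)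
    (hξU : tsupport ξ ⊆ U) (hu : ∀ x ∈ tsupport ξ, ContDiffAt ℝ 3 u x)
    (hfin : lagrangianEnergy ℓ u U ≠ ∞)
    (hmin : IsLocalMin (fun t => lagrangianEnergy ℓ (innerVariation u ξ t) U) 0) :
    IsLocalMin (fun t => ∫ x in tsupport ξ, ℓ (lapGrad (innerVariation u ξ t) x)) 0 := by
  have hsmooth : ∀ᶠ t in 𝓝 (0 : ℝ), ∀ x ∈ tsupport ξ,
      ContDiffAt ℝ 1 (fun t y => ℓ (lapGrad (innerVariation u ξ t) y)).uncurry (t, x) :=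
    hcpt.isCompact.eventually_forall_of_forall_eventually fun x hx =>
      (contDiffAt_uncurry_lagrangian_innerVariation hℓ (hu x hx) hξ.contDiffAt).eventually
        (by simp)
  have hint : ∀ᶠ t in 𝓝 (0 : ℝ),
      IntegrableOn (fun x => ℓ (lapGrad (innerVariation u ξ t) x)) (tsupport ξ) := by
    filter_upwards [hsmooth] with t ht
    exact ContinuousOn.integrableOn_compact hcpt fun x hx => ((ht x hx).continuousAt.comp
      (f := (t, ·)) (Continuous.prodMk_right t).continuousAt).continuousWithinAt
  filter_upwards [hmin, hint] with t hmin_t hint_t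
  exact setIntegral_le_of_setLIntegral_le_of_eqOn_sdiff hcpt.measurableSet hξU hU
    (fun _ => hℓ0 _) (fun _ => hℓ0 _) hint.self_of_nhds hint_t
    (fun x hx => by simp only [lapGrad_innerVariation_of_notMem_tsupport hx.2])
    (by simpa [lagrangianEnergy] using hfin) hmin_t

theorem setIntegral_firstVariation_eq_zero_of_isLocalMin_lagrangianEnergy (hℓ : ContDiff ℝ 1 ℓ)
    (hℓ0 : 0 ≤ ℓ) (hξ : ContDiff ℝ 3 ξ) (hcpt : HasCompactSupport ξ) (hU : MeasurableSet U)
    (hξU : tsupport ξ ⊆ U) (hu : ∀ x ∈ tsupport ξ, ContDiffAt ℝ 3 u x)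
    (hfin : lagrangianEnergy ℓ u U ≠ ∞)
    (hmin : IsLocalMin (fun t => lagrangianEnergy ℓ (innerVariation u ξ t) U) 0) :
    ∫ x in U, (-(ℓ (lapGrad u x) * divergence ξ x) +
      fderiv ℝ ℓ (lapGrad u x) (lapGradCommutator u ξ x)) = 0 := by
  set h := fun y => ℓ (lapGrad u y)
  obtain ⟨hvar_int, hvar_deriv⟩ := integrableOn_deriv_and_hasDerivAt_setIntegral (μ := volume)
    hcpt fun x hx => contDiffAt_uncurry_lagrangian_innerVariation hℓ (hu x hx) hξ.contDiffAt
  have hvar := (isLocalMin_setIntegral_tsupport_of_isLocalMin_lagrangianEnergy hℓ hℓ0 hξ hcpt hU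
    hξU hu hfin hmin).hasDerivAt_eq_zero hvar_deriv
  obtain ⟨hdiv_int, hdiv⟩ := integrable_and_integral_fderiv_apply_add_mul_divergence (h := h)
    (fun x hx => hℓ.contDiffAt.comp x (contDiffAt_lapGrad (hu x hx) (by norm_num)))
    (hξ.of_le (by norm_num)) hcpt
  rw [← setIntegral_eq_integral_of_forall_compl_eq_zero (s := tsupport ξ) fun x hx => by
    simp [image_eq_zero_of_notMem_tsupport hx, divergence_eq_zero_of_notMem_tsupport hx]] at hdiv
  calc ∫ x in U, (-(h x * divergence ξ x) + fderiv ℝ ℓ (lapGrad u x) (lapGradCommutator u ξ x))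
      = ∫ x in tsupport ξ,
          (-(h x * divergence ξ x) + fderiv ℝ ℓ (lapGrad u x) (lapGradCommutator u ξ x)) :=
        setIntegral_eq_of_subset_of_forall_sdiff_eq_zero hU hξU fun x hx => by
          simp [divergence_eq_zero_of_notMem_tsupport hx.2,
            lapGradCommutator_eq_zero_of_notMem_tsupport hx.2]
    _ = ∫ x in tsupport ξ, (deriv (fun t => ℓ (lapGrad (innerVariation u ξ t) x)) 0 -
          (fderiv ℝ h x (ξ x) + h x * divergence ξ x)) :=
        setIntegral_congr_fun hcpt.measurableSet fun x hx => by
          simp only [(hasDerivAt_lagrangian_innerVariation (hℓ.differentiable one_ne_zero)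
            (hu x hx) (hξ.contDiffAt.of_le (by norm_num))).deriv]
          ring
    _ = 0 := by rw [integral_sub hvar_int hdiv_int.integrableOn, hvar, hdiv, sub_zero]

end Stationarity

section HessianLagrangian

variable {F G : Type*} [NormedAddCommGroup F] [NormedAddCommGroup G] {eps : ℝ} {p : ℕ}

/-- The Lagrangian `(a, b) ↦ |a|² + ε |b|^p`. Evaluated at `(Δu, ∇u)` with `p = m + 1`, it is the
density of the perturbed Hessian energy `H_ε`. -/
def hessLagrangian (eps : ℝ) (p : ℕ) (z : F × G) : ℝ := ‖z.1‖ ^ 2 + eps * ‖z.2‖ ^ p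

lemma hessLagrangian_nonneg (heps : 0 ≤ eps) (p : ℕ) :
    0 ≤ (hessLagrangian eps p : F × G → ℝ) := fun z => by
  simp only [hessLagrangian, Pi.zero_apply]
  positivity

variable [InnerProductSpace ℝ F] [InnerProductSpace ℝ G]

lemma hasFDerivAt_norm_pow (hp : 2 ≤ p) (b : G) :
    HasFDerivAt (fun y : G => ‖y‖ ^ p) ((p * ‖b‖ ^ (p - 2)) • innerSL ℝ b) b := by
  have h := hasFDerivAt_norm_rpow b (p := p) (by exact_mod_cast hp)
  rw [← Nat.cast_ofNat, ← Nat.cast_sub hp] at h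
  simpa only [Real.rpow_natCast] using h

lemma contDiff_hessLagrangian (hp : 2 ≤ p) :
    ContDiff ℝ 1 (hessLagrangian eps p : F × G → ℝ) := by
  have hpow : ContDiff ℝ 1 fun b : G => ‖b‖ ^ p := by
    simpa only [Real.rpow_natCast] using contDiff_norm_rpow (E := G) (p := p) (by exact_mod_cast hp)
  exact (contDiff_fst.norm_sq ℝ).add (contDiff_const.mul (hpow.comp contDiff_snd))

lemma fderiv_hessLagrangian_apply (hp : 2 ≤ p) (z w : F × G) :
    fderiv ℝ (hessLagrangian eps p) z w =
      2 * ⟪z.1, w.1⟫ + eps * p * ‖z.2‖ ^ (p - 2) * ⟪z.2, w.2⟫ := by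
  have h := (hasFDerivAt_fst (𝕜 := ℝ) (p := z)).norm_sq.add
    (((hasFDerivAt_norm_pow hp z.2).comp z hasFDerivAt_snd).const_mul eps)
  rw [HasFDerivAt.fderiv (f := hessLagrangian eps p) h]
  simp only [ContinuousLinearMap.smul_comp, add_apply, smul_apply, ContinuousLinearMap.comp_apply,
    ContinuousLinearMap.coe_fst', coe_innerSL_apply, nsmul_eq_mul, Nat.cast_ofNat,
    ContinuousLinearMap.coe_snd', smul_eq_mul]
  ring

end HessianLagrangian

section Coordinates

variable {m : ℕ} {F : Type*} [NormedAddCommGroup F] [InnerProductSpace ℝ F]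
  {u : EuclideanSpace ℝ (Fin m) → F} {x : EuclideanSpace ℝ (Fin m)}

lemma inner_clm_apply_eq_sum_single (a : F) (L : EuclideanSpace ℝ (Fin m) →L[ℝ] F)
    (v : EuclideanSpace ℝ (Fin m)) :
    ⟪a, L v⟫ = ∑ β, ⟪a, L (EuclideanSpace.single β 1)⟫ * v β := by
  simp only [clm_apply_eq_sum_single L v, inner_sum, inner_smul_right, mul_comm]

lemma inner_lapGradCommutator_fst (hu : DifferentiableAt ℝ (fderiv ℝ u) x)
    (ξ : EuclideanSpace ℝ (Fin m) → EuclideanSpace ℝ (Fin m)) (a : F) :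
    ⟪a, (lapGradCommutator u ξ x).1⟫ =
      2 * (∑ α, ∑ β, ⟪a, pderiv2 u α β x⟫ * pderiv1 ξ α x β) +
        ∑ β, ⟪a, pderiv1 u β x⟫ * ∑ α, pderiv2 ξ α α x β := by
  have hsecond (α : Fin m) : ⟪a, pderiv1 (fderiv ℝ u) α x (pderiv1 ξ α x)⟫ =
      ∑ β, ⟪a, pderiv2 u α β x⟫ * pderiv1 ξ α x β := by
    rw [inner_clm_apply_eq_sum_single]
    simp only [pderiv1_fderiv_apply_single hu]
  have hlap : ⟪a, fderiv ℝ u x (lap ξ x)⟫ =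
      ∑ β, ⟪a, pderiv1 u β x⟫ * ∑ α, pderiv2 ξ α α x β := by
    rw [inner_clm_apply_eq_sum_single]
    simp only [lap, WithLp.ofLp_sum, Finset.sum_apply, pderiv1]
  simp only [lapGradCommutator, inner_add_right, inner_smul_right, inner_sum, hsecond, hlap]

lemma inner_lapGrad_snd_lapGradCommutator_snd (u : EuclideanSpace ℝ (Fin m) → F)
    (ξ : EuclideanSpace ℝ (Fin m) → EuclideanSpace ℝ (Fin m)) (x : EuclideanSpace ℝ (Fin m)) :
    ⟪(lapGrad u x).2, (lapGradCommutator u ξ x).2⟫ =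
      ∑ α, ∑ β, ⟪pderiv1 u α x, pderiv1 u β x⟫ * pderiv1 ξ α x β := by
  simp only [lapGrad, lapGradCommutator, PiLp.inner_apply]
  exact Finset.sum_congr rfl fun α _ => inner_clm_apply_eq_sum_single _ _ _

end Coordinates

section FirstVariation

variable {m n : ℕ} {eps : ℝ} {u : EuclideanSpace ℝ (Fin m) → EuclideanSpace ℝ (Fin (n + 1))}
  {ξ : EuclideanSpace ℝ (Fin m) → EuclideanSpace ℝ (Fin m)} {x : EuclideanSpace ℝ (Fin m)}
  {U : Set (EuclideanSpace ℝ (Fin m))}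

lemma HEnergy_eq_lagrangianEnergy (eps : ℝ)
    (u : EuclideanSpace ℝ (Fin m) → EuclideanSpace ℝ (Fin (n + 1)))
    (U : Set (EuclideanSpace ℝ (Fin m))) :
    HEnergy eps u U = lagrangianEnergy (hessLagrangian eps (m + 1)) u U := by
  simp only [HEnergy, lagrangianEnergy, hessLagrangian, norm_lapGrad_snd]
  rfl

lemma isLocalMin_HEnergy_innerVariation (hu : IsHMinimizer eps u U) (hU : IsOpen U)
    (hξ : ContDiff ℝ (⊤ : ℕ∞) ξ) (hcpt : HasCompactSupport ξ) (hξU : tsupport ξ ⊆ U) :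
    IsLocalMin (fun t => HEnergy eps (innerVariation u ξ t) U) 0 := by
  obtain ⟨husmooth, husphere, -, humin⟩ := hu
  filter_upwards [eventually_mapsTo_add_smul hU hξ.continuous hcpt hξU] with t ht
  rw [innerVariation_zero]
  exact humin _ (husmooth.comp (contDiff_id.add (hξ.const_smul t)).contDiffOn ht)
    (fun x hx => husphere _ (ht hx))
    ⟨tsupport ξ, hcpt, hξU, fun x hx => innerVariation_eq_of_notMem_tsupport hx u t⟩

theorem minimizer_first_variation_general (hm : 1 ≤ m) (heps : 0 ≤ eps) (hU : IsOpen U)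
    (hu : IsHMinimizer eps u U) : IsStationaryH eps u U := by
  intro ξ hξ hcpt hξU
  have hu3 : ∀ x ∈ U, ContDiffAt ℝ 3 u x := fun x hx =>
    (hu.1.contDiffAt (hU.mem_nhds hx)).of_le (by norm_cast)
  have hmin := isLocalMin_HEnergy_innerVariation hu hU hξ hcpt hξU
  simp only [HEnergy_eq_lagrangianEnergy] at hmin
  have hstat := setIntegral_firstVariation_eq_zero_of_isLocalMin_lagrangianEnergy
    (contDiff_hessLagrangian (by omega)) (hessLagrangian_nonneg heps _)
    (hξ.of_le (by norm_cast)) hcpt hU.measurableSet hξU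
    (fun x hx => hu3 x (hξU hx)) (HEnergy_eq_lagrangianEnergy eps u U ▸ hu.2.2.1.ne) hmin
  rw [← hstat]
  refine setIntegral_congr_fun hU.measurableSet fun x hx => ?_
  rw [fderiv_hessLagrangian_apply (by omega), inner_lapGradCommutator_fst
    (differentiableAt_fderiv (hu3 x hx) (by norm_num)), inner_lapGrad_snd_lapGradCommutator_snd,
    hessLagrangian, norm_lapGrad_snd, divergence, show m + 1 - 2 = m - 1 by omega]
  push_cast [lapGrad]
  ring

end FirstVariation

/-- **First-variation (inner-variation) identity** (Lemma 2.5). A smooth constrained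
minimizer of `H_ε` on the ball `B_{2r}` satisfies the ε-stationarity identity: for every
smooth compactly supported vector field `ξ` in `B_{2r}`,
`∫ [ -(|Δu|²+ε|∇u|^{m+1}) div ξ + 4 (Δu·∂²_{αβ}u) ∂_αξ^β + 2 (Δu·∂_βu) Δξ^β
  + ε(m+1)|∇u|^{m-1} (∂_αu·∂_βu) ∂_αξ^β ] dx = 0`. -/
theorem minimizer_first_variation {m n : ℕ} (hm : 2 ≤ m) (hn : 1 ≤ n)
    (r eps : ℝ) (hr : 0 < r) (heps : 0 < eps)
    (u : EuclideanSpace ℝ (Fin m) → EuclideanSpace ℝ (Fin (n + 1)))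
    (hu : IsHMinimizer eps u (Metric.ball (0 : EuclideanSpace ℝ (Fin m)) (2 * r))) :
    IsStationaryH eps u (Metric.ball (0 : EuclideanSpace ℝ (Fin m)) (2 * r)) :=
  minimizer_first_variation_general (by omega) heps.le isOpen_ball hu

end
end

section
/- Let n ≥ 1 be an integer, ρ > 0, and let u : ℝ^5 → ℝ^{n+1} be smooth on an open neighborhood of the closed ball {x ∈ ℝ^5 : |x| ≤ ρ} with |u(x)| = 1 for all x with |x| ≤ ρ. Then there exists η₁ > 0 such that for every η with 0 < η < η₁ and every map v : ℝ^5 → ℝ^{n+1} that is smooth on an open neighborhood of the closed annulus A_η = {x : ρ(1−η) ≤ |x| ≤ ρ} and satisfies: (i) Δ(Δv) = 0 componentwise on the open annulus {x : ρ(1−η) < |x| < ρ}, (ii) v(x) = u(x) for all x with |x| = ρ or |x| = ρ(1−η), and (iii) the radial derivative of v equals the radial derivative of u at every x with |x| = ρ or |x| = ρ(1−η), one has |v(x)| ≥ 1/2 for all x ∈ A_η. -/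
open MeasureTheory Filter Metric
open scoped ENNReal RealInnerProductSpace Topology

noncomputable section

/-!
The difference `w = v - u` has zero Cauchy data on the boundary of the annulus `A`, and `Δ²w` is
bounded there independently of the thickness. In dimension `5` the function `1 / |x - c|` is a
multiple of the fundamental solution of `Δ²`, and with `τ` a smooth approximation of it the
quadratic form `∫_A w τ Δ²w - ½ ∫_A w² Δ²τ` is nonnegative. Since `Δ²τ` is positive and concentrates
at `c`, choosing for `c` a maximum point of `|w|` bounds `(max |w|)²` by
`C · max |w| · sup |Δ²w| · ∫_A 1 / |x - c|`. The last integral tends to `0` with the measure of `A`,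
uniformly in `c`, so `v` is uniformly close to `u` and `|v| ≥ 1/2`.
-/

open scoped Laplacian Gradient

section Laplacian

variable {ι E F : Type*} [Fintype ι] [NormedAddCommGroup E] [NormedAddCommGroup F]
  [NormedSpace ℝ F]

theorem hasFDerivAt_fderiv_apply_const [NormedSpace ℝ E] {f : E → F} {x : E}
    (hf : ContDiffAt ℝ 2 f x) (v : E) :
    HasFDerivAt (fun y => fderiv ℝ f y v) ((fderiv ℝ (fderiv ℝ f) x).flip v) x := by
  have hdf : DifferentiableAt ℝ (fderiv ℝ f) x :=
    (hf.fderiv_right (m := 1) (by norm_num)).differentiableAt one_ne_zero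
  simpa using hdf.hasFDerivAt.clm_apply (hasFDerivAt_const v x)

variable [InnerProductSpace ℝ E] [FiniteDimensional ℝ E]

theorem laplacian_eq_sum_fderiv_fderiv (b : OrthonormalBasis ι ℝ E) {f : E → F} {x : E}
    (hf : ContDiffAt ℝ 2 f x) :
    Δ f x = ∑ i, fderiv ℝ (fun y => fderiv ℝ f y (b i)) x (b i) := by
  simp [InnerProductSpace.laplacian_eq_iteratedFDeriv_orthonormalBasis f b,
    iteratedFDeriv_two_apply, (hasFDerivAt_fderiv_apply_const hf _).fderiv]

theorem contDiffAt_laplacian {m n : WithTop ℕ∞} {f : E → F} {x : E} (hf : ContDiffAt ℝ n f x)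
    (hmn : m + 2 ≤ n) : ContDiffAt ℝ m (Δ f) x := by
  have hD : ContDiffAt ℝ m (fderiv ℝ (fderiv ℝ f)) x :=
    (hf.fderiv_right (m := m + 1) (by rwa [add_assoc, one_add_one_eq_two])).fderiv_right le_rfl
  simp only [InnerProductSpace.laplacian_eq_iteratedFDeriv_stdOrthonormalBasis,
    iteratedFDeriv_two_apply]
  exact ContDiffAt.sum fun i _ => (hD.clm_apply contDiffAt_const).clm_apply contDiffAt_const

theorem inner_gradient_eq_sum (b : OrthonormalBasis ι ℝ E) {f g : E → ℝ} {x : E} :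
    ⟪∇ f x, ∇ g x⟫ = ∑ i, fderiv ℝ f x (b i) * fderiv ℝ g x (b i) := by
  rw [← b.sum_inner_mul_inner]
  simp [inner_gradient_left, inner_gradient_right]

theorem laplacian_mul {f g : E → ℝ} {x : E} (hf : ContDiffAt ℝ 2 f x) (hg : ContDiffAt ℝ 2 g x) :
    Δ (fun y => f y * g y) x = f x * Δ g x + 2 * ⟪∇ f x, ∇ g x⟫ + g x * Δ f x := by
  let b := stdOrthonormalBasis ℝ E
  have first_order (v : E) : (fun y => fderiv ℝ (fun z => f z * g z) y v) =ᶠ[𝓝 x]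
      fun y => f y * fderiv ℝ g y v + g y * fderiv ℝ f y v := by
    filter_upwards [hf.eventually (by simp), hg.eventually (by simp)] with y hfy hgy
    simp [fderiv_fun_mul (hfy.differentiableAt two_ne_zero) (hgy.differentiableAt two_ne_zero)]
  have second_order (v : E) : fderiv ℝ (fun y => fderiv ℝ (fun z => f z * g z) y v) x v =
      f x * fderiv ℝ (fun y => fderiv ℝ g y v) x v + 2 * (fderiv ℝ f x v * fderiv ℝ g x v) +
        g x * fderiv ℝ (fun y => fderiv ℝ f y v) x v := by
    have hdf := hasFDerivAt_fderiv_apply_const hf v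
    have hdg := hasFDerivAt_fderiv_apply_const hg v
    rw [(first_order v).fderiv_eq, hdf.fderiv, hdg.fderiv,
      (((hf.differentiableAt two_ne_zero).hasFDerivAt.fun_mul hdg).fun_add
        ((hg.differentiableAt two_ne_zero).hasFDerivAt.fun_mul hdf)).fderiv]
    simp only [add_apply, smul_apply, smul_eq_mul]
    ring
  rw [laplacian_eq_sum_fderiv_fderiv b (hf.mul hg), laplacian_eq_sum_fderiv_fderiv b hf,
    laplacian_eq_sum_fderiv_fderiv b hg, inner_gradient_eq_sum b]
  simp only [second_order, Finset.sum_add_distrib, Finset.mul_sum]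

theorem lap_eq_laplacian {m : ℕ} {f : EuclideanSpace ℝ (Fin m) → F}
    {x : EuclideanSpace ℝ (Fin m)} (hf : ContDiffAt ℝ 2 f x) : lap f x = Δ f x := by
  simp [laplacian_eq_sum_fderiv_fderiv (EuclideanSpace.basisFun (Fin m) ℝ) hf, lap, pderiv2,
    pderiv1]

theorem lap_lap_eq_laplacian_laplacian {m : ℕ} {f : EuclideanSpace ℝ (Fin m) → F}
    {x : EuclideanSpace ℝ (Fin m)} (hf : ContDiffAt ℝ 4 f x) : lap (lap f) x = Δ (Δ f) x := by
  have hlap : lap f =ᶠ[𝓝 x] Δ f := by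
    filter_upwards [hf.eventually (by simp)] with y hy
    exact lap_eq_laplacian (hy.of_le (by norm_num))
  have hsmooth : ContDiffAt ℝ 2 (Δ f) x := contDiffAt_laplacian hf (by norm_num)
  rw [lap_eq_laplacian (hsmooth.congr_of_eventuallyEq hlap),
    (InnerProductSpace.laplacian_congr_nhds hlap).eq_of_nhds]

end Laplacian

section ZeroExtension

variable {E F : Type*} [NormedAddCommGroup E] [NormedSpace ℝ E] [NormedAddCommGroup F]
  [NormedSpace ℝ F] {Ω : Set E} {f : E → F}

theorem lineDeriv_indicator (hΩ : IsOpen Ω) (hf : DifferentiableOn ℝ f Ω) {x : E}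
    (hx : x ∉ frontier Ω) (v : E) :
    lineDeriv ℝ (Ω.indicator f) x v = Ω.indicator (fun y => fderiv ℝ f y v) x := by
  by_cases hxΩ : x ∈ Ω
  · have heq : Ω.indicator f =ᶠ[𝓝 x] f :=
      eventually_of_mem (hΩ.mem_nhds hxΩ) fun y hy => Set.indicator_of_mem hy f
    rw [Set.indicator_of_mem hxΩ, heq.lineDeriv_eq,
      (hf.differentiableAt (hΩ.mem_nhds hxΩ)).lineDeriv_eq_fderiv]
  · have hxcl : x ∉ closure Ω := fun h => hx (hΩ.frontier_eq ▸ ⟨h, hxΩ⟩)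
    have heq : Ω.indicator f =ᶠ[𝓝 x] fun _ => 0 :=
      eventually_of_mem (isClosed_closure.isOpen_compl.mem_nhds hxcl) fun y hy =>
        Set.indicator_of_notMem (fun hyΩ => hy (subset_closure hyΩ)) f
    rw [Set.indicator_of_notMem hxΩ, heq.lineDeriv_eq, lineDeriv, deriv_const]

variable [FiniteDimensional ℝ E]

theorem norm_le_mul_dist_of_eq_zero_on_frontier {K : ℝ} (hΩ : IsOpen Ω) (hf : DiffContOnCl ℝ f Ω)
    (hK : ∀ x ∈ Ω, ‖fderiv ℝ f x‖ ≤ K) (hf₀ : ∀ x ∈ frontier Ω, f x = 0) {p q : E} (hp : p ∈ Ω)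
    (hq : q ∉ Ω) : ‖f p‖ ≤ K * dist p q := by
  have hK₀ : 0 ≤ K := (norm_nonneg _).trans (hK p hp)
  obtain ⟨z, hz, hpz⟩ := exists_mem_frontier_infDist_compl_eq_dist hp (by rintro rfl; simp at hq)
  set r := infDist p Ωᶜ
  have hr : 0 < r := (infDist_nonneg).lt_of_ne' fun h => by
    obtain rfl : p = z := dist_eq_zero.1 (hpz.symm.trans h)
    exact (hΩ.frontier_eq ▸ hz).2 hp
  have mean_value : ∀ y ∈ ball p r, ‖f y - f p‖ ≤ K * r := fun y hy => by
    refine ((convex_ball p r).norm_image_sub_le_of_norm_fderiv_le (𝕜 := ℝ)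
      (fun x hx => hf.differentiableAt hΩ (ball_infDist_compl_subset hx))
      (fun x hx => hK x (ball_infDist_compl_subset hx)) (mem_ball_self hr) hy).trans ?_
    rw [← dist_eq_norm]
    exact mul_le_mul_of_nonneg_left (mem_ball.1 hy).le hK₀
  have hcont : ContinuousOn (fun y => ‖f y - f p‖) (closure (ball p r)) :=
    ((hf.continuousOn.mono (closure_mono ball_infDist_compl_subset)).sub continuousOn_const).norm
  have hzr : z ∈ closure (ball p r) := by
    rw [closure_ball p hr.ne', mem_closedBall', hpz]
  have hfz := le_on_closure mean_value hcont continuousOn_const hzr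
  rw [hf₀ z hz, zero_sub, norm_neg] at hfz
  exact hfz.trans (mul_le_mul_of_nonneg_left (infDist_le_dist_of_mem hq) hK₀)

theorem lipschitzWith_indicator {K : NNReal} (hΩ : IsOpen Ω) (hf : DiffContOnCl ℝ f Ω)
    (hK : ∀ x ∈ Ω, ‖fderiv ℝ f x‖ ≤ K) (hf₀ : ∀ x ∈ frontier Ω, f x = 0) :
    LipschitzWith K (Ω.indicator f) := by
  have exit {p q : E} (hp : p ∈ Ω) (hq : q ∉ Ω) : ‖f p‖ ≤ K * dist p q :=
    norm_le_mul_dist_of_eq_zero_on_frontier hΩ hf hK hf₀ hp hq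
  refine LipschitzWith.of_dist_le_mul fun p q => ?_
  by_cases hp : p ∈ Ω <;> by_cases hq : q ∈ Ω
  · rw [Set.indicator_of_mem hp, Set.indicator_of_mem hq]
    by_cases hpq : segment ℝ p q ⊆ Ω
    · rw [dist_comm, dist_comm p, dist_eq_norm, dist_eq_norm]
      exact (convex_segment p q).norm_image_sub_le_of_norm_fderiv_le (𝕜 := ℝ)
        (fun x hx => hf.differentiableAt hΩ (hpq hx)) (fun x hx => hK x (hpq hx))
        (left_mem_segment ℝ p q) (right_mem_segment ℝ p q)
    · obtain ⟨y, hy, hyΩ⟩ := Set.not_subset.1 hpq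
      calc dist (f p) (f q) ≤ ‖f p‖ + ‖f q‖ := dist_le_norm_add_norm _ _
        _ ≤ K * dist p y + K * dist q y := add_le_add (exit hp hyΩ) (exit hq hyΩ)
        _ = K * dist p q := by
          rw [dist_comm q, ← mul_add, dist_add_dist_of_mem_segment hy]
  · simpa [hp, hq] using exit hp hq
  · simpa [hp, hq, dist_comm] using exit hq hp
  · simp only [Set.indicator_of_notMem hp, Set.indicator_of_notMem hq, dist_self]
    positivity

theorem setIntegral_fderiv_apply_eq_zero [MeasurableSpace E] [BorelSpace E] {μ : Measure E}
    [μ.IsAddHaarMeasure] {f : E → ℝ} (hΩ : IsOpen Ω) (hΩb : Bornology.IsBounded Ω)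
    (hμ : μ (frontier Ω) = 0) (hf : ∀ x ∈ closure Ω, ContDiffAt ℝ 1 f x)
    (hf₀ : ∀ x ∈ frontier Ω, f x = 0) (v : E) : ∫ x in Ω, fderiv ℝ f x v ∂μ = 0 := by
  have : ProperSpace E := FiniteDimensional.proper_real E
  have hdiff : DiffContOnCl ℝ f Ω := DiffContOnCl.mk
    (fun x hx => ((hf x (subset_closure hx)).differentiableAt one_ne_zero).differentiableWithinAt)
    (fun x hx => (hf x hx).continuousAt.continuousWithinAt)
  obtain ⟨K, hK⟩ := hΩb.isCompact_closure.exists_bound_of_continuousOn fun x hx =>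
    ((hf x hx).fderiv_right (m := 0) (by simp)).continuousAt.continuousWithinAt
  have hlip : LipschitzWith K.toNNReal (Ω.indicator f) := lipschitzWith_indicator hΩ hdiff
    (fun x hx => (hK x (subset_closure hx)).trans (Real.le_coe_toNNReal K)) hf₀
  have hsupp : HasCompactSupport (Ω.indicator f) := HasCompactSupport.intro hΩb.isCompact_closure
    fun x hx => Set.indicator_of_notMem (fun hxΩ => hx (subset_closure hxΩ)) f
  have hlineDeriv : 0 = ∫ x, lineDeriv ℝ (Ω.indicator f) x v ∂μ := by
    simpa [lineDeriv] using
      (LipschitzWith.const' (1 : ℝ) (K := 0)).integral_lineDeriv_mul_eq (μ := μ) hlip hsupp (-v)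
  rw [← integral_indicator hΩ.measurableSet]
  refine (integral_congr_ae ?_).trans hlineDeriv.symm
  filter_upwards [measure_eq_zero_iff_ae_notMem.1 hμ] with x hx
  exact (lineDeriv_indicator hΩ hdiff.differentiableOn hx v).symm

end ZeroExtension

section WeightedIdentity

variable {E : Type*} [NormedAddCommGroup E] [InnerProductSpace ℝ E] [FiniteDimensional ℝ E]
  [MeasurableSpace E] [BorelSpace E] {μ : Measure E} {Ω : Set E}

theorem integrableOn_of_forall_closure_continuousAt [IsFiniteMeasureOnCompacts μ] {f : E → ℝ}
    (hΩb : Bornology.IsBounded Ω) (hf : ∀ x ∈ closure Ω, ContinuousAt f x) :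
    IntegrableOn f Ω μ :=
  (ContinuousOn.integrableOn_compact hΩb.isCompact_closure fun x hx =>
    (hf x hx).continuousWithinAt).mono_set subset_closure

variable [μ.IsAddHaarMeasure]

theorem setIntegral_mul_laplacian_comm {f g : E → ℝ} (hΩ : IsOpen Ω)
    (hΩb : Bornology.IsBounded Ω) (hμ : μ (frontier Ω) = 0)
    (hf : ∀ x ∈ closure Ω, ContDiffAt ℝ 2 f x) (hg : ∀ x ∈ closure Ω, ContDiffAt ℝ 2 g x)
    (hf₀ : ∀ x ∈ frontier Ω, f x = 0) (hf₁ : ∀ x ∈ frontier Ω, fderiv ℝ f x = 0) :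
    ∫ x in Ω, f x * Δ g x ∂μ = ∫ x in Ω, g x * Δ f x ∂μ := by
  let b := stdOrthonormalBasis ℝ E
  let X i x := f x * fderiv ℝ g x (b i) - g x * fderiv ℝ f x (b i)
  have hX i : ∀ x ∈ closure Ω, ContDiffAt ℝ 1 (X i) x := fun x hx =>
    (((hf x hx).of_le one_le_two).mul (((hg x hx).fderiv_right (m := 1) (by norm_num)).clm_apply
      contDiffAt_const)).sub (((hg x hx).of_le one_le_two).mul
        (((hf x hx).fderiv_right (m := 1) (by norm_num)).clm_apply contDiffAt_const))
  have hX₀ i : ∀ x ∈ frontier Ω, X i x = 0 := fun x hx => by simp [X, hf₀ x hx, hf₁ x hx]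
  have divergence : ∀ x ∈ Ω, ∑ i, fderiv ℝ (X i) x (b i) = f x * Δ g x - g x * Δ f x := by
    intro x hx
    have hfx := hf x (subset_closure hx)
    have hgx := hg x (subset_closure hx)
    rw [laplacian_eq_sum_fderiv_fderiv b hfx, laplacian_eq_sum_fderiv_fderiv b hgx,
      Finset.mul_sum, Finset.mul_sum, ← Finset.sum_sub_distrib]
    refine Finset.sum_congr rfl fun i _ => ?_
    have hdf := hasFDerivAt_fderiv_apply_const hfx (b i)
    have hdg := hasFDerivAt_fderiv_apply_const hgx (b i)
    rw [hdf.fderiv, hdg.fderiv,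
      (((hfx.differentiableAt two_ne_zero).hasFDerivAt.fun_mul hdg).fun_sub
        ((hgx.differentiableAt two_ne_zero).hasFDerivAt.fun_mul hdf)).fderiv]
    simp only [sub_apply, add_apply, smul_apply, smul_eq_mul]
    ring
  have int_mul_laplacian {f g : E → ℝ} (hf : ∀ x ∈ closure Ω, ContDiffAt ℝ 2 f x)
      (hg : ∀ x ∈ closure Ω, ContDiffAt ℝ 2 g x) : IntegrableOn (fun x => f x * Δ g x) Ω μ :=
    integrableOn_of_forall_closure_continuousAt hΩb fun x hx => (hf x hx).continuousAt.mul
      (contDiffAt_laplacian (m := 0) (hg x hx) (by simp)).continuousAt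
  rw [← sub_eq_zero, ← integral_sub (int_mul_laplacian hf hg) (int_mul_laplacian hg hf),
    ← setIntegral_congr_fun hΩ.measurableSet divergence, integral_finsetSum]
  · exact Finset.sum_eq_zero fun i _ =>
      setIntegral_fderiv_apply_eq_zero hΩ hΩb hμ (hX i) (hX₀ i) (b i)
  · exact fun i _ => integrableOn_of_forall_closure_continuousAt hΩb fun x hx =>
      ((((hX i) x hx).fderiv_right (m := 0) (by simp)).clm_apply contDiffAt_const).continuousAt

-- Green's identity for the pairs `(w φ, Δ w)` and `(w², Δ φ)`; the terms `w Δ w Δ φ` cancel.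
theorem setIntegral_mul_bilaplacian_sub_eq {w φ : E → ℝ} (hΩ : IsOpen Ω)
    (hΩb : Bornology.IsBounded Ω) (hμ : μ (frontier Ω) = 0)
    (hw : ∀ x ∈ closure Ω, ContDiffAt ℝ 4 w x) (hφ : ∀ x ∈ closure Ω, ContDiffAt ℝ 4 φ x)
    (hw₀ : ∀ x ∈ frontier Ω, w x = 0) (hw₁ : ∀ x ∈ frontier Ω, fderiv ℝ w x = 0) :
    ∫ x in Ω, w x * φ x * Δ (Δ w) x ∂μ - (∫ x in Ω, w x ^ 2 * Δ (Δ φ) x ∂μ) / 2 =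
      ∫ x in Ω, φ x * Δ w x ^ 2 + 2 * Δ w x * ⟪∇ w x, ∇ φ x⟫ - ‖∇ w x‖ ^ 2 * Δ φ x ∂μ := by
  have laplacian_c2 {f : E → ℝ} (hf : ∀ x ∈ closure Ω, ContDiffAt ℝ 4 f x) :
      ∀ x ∈ closure Ω, ContDiffAt ℝ 2 (Δ f) x := fun x hx =>
    contDiffAt_laplacian (hf x hx) (by norm_num)
  have mul_c2 {f : E → ℝ} (hf : ∀ x ∈ closure Ω, ContDiffAt ℝ 4 f x) :
      ∀ x ∈ closure Ω, ContDiffAt ℝ 2 (fun y => w y * f y) x := fun x hx =>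
    ((hw x hx).mul (hf x hx)).of_le (by norm_num)
  have green {f g : E → ℝ} (hf : ∀ x ∈ closure Ω, ContDiffAt ℝ 4 f x)
      (hg : ∀ x ∈ closure Ω, ContDiffAt ℝ 4 g x) :
      ∫ x in Ω, w x * f x * Δ (Δ g) x ∂μ =
        ∫ x in Ω, Δ g x * Δ (fun y => w y * f y) x ∂μ := by
    refine setIntegral_mul_laplacian_comm hΩ hΩb hμ (mul_c2 hf) (laplacian_c2 hg)
      (fun x hx => by simp [hw₀ x hx]) fun x hx => ?_
    have hx' := frontier_subset_closure hx
    simp [fderiv_fun_mul ((hw x hx').differentiableAt (by simp))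
      ((hf x hx').differentiableAt (by simp)), hw₀ x hx, hw₁ x hx]
  have int_laplacian {f g : E → ℝ} (hf : ∀ x ∈ closure Ω, ContDiffAt ℝ 4 f x)
      (hg : ∀ x ∈ closure Ω, ContDiffAt ℝ 4 g x) :
      IntegrableOn (fun x => Δ g x * Δ (fun y => w y * f y) x) Ω μ :=
    integrableOn_of_forall_closure_continuousAt hΩb fun x hx =>
      (laplacian_c2 hg x hx).continuousAt.mul
        (contDiffAt_laplacian (m := 0) (mul_c2 hf x hx) (by simp)).continuousAt
  simp only [pow_two (w _)]
  rw [green hφ hw, green hw hφ, ← integral_div, ← integral_sub (int_laplacian hφ hw)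
    ((int_laplacian hw hφ).div_const 2)]
  refine setIntegral_congr_fun hΩ.measurableSet fun x hx => ?_
  have hwx := (hw x (subset_closure hx)).of_le (show (2 : WithTop ℕ∞) ≤ 4 by norm_num)
  have hφx := (hφ x (subset_closure hx)).of_le (show (2 : WithTop ℕ∞) ≤ 4 by norm_num)
  simp only [laplacian_mul hwx hφx, laplacian_mul hwx hwx, real_inner_self_eq_norm_sq]
  ring

end WeightedIdentity

section RegularizedKernel

variable {E : Type*} [NormedAddCommGroup E] {c : E} {ε : ℝ}

/-- The kernel `1 / |x - c|`, made smooth across its centre `c` by adding `ε²` under the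
root. -/
def regKernel (c : E) (ε : ℝ) (x : E) : ℝ := (√(‖x - c‖ ^ 2 + ε ^ 2))⁻¹

theorem regKernel_nonneg (x : E) : 0 ≤ regKernel c ε x := by
  unfold regKernel
  positivity

theorem regKernel_pos (hε : 0 < ε) (x : E) : 0 < regKernel c ε x := by
  unfold regKernel
  positivity

theorem regKernel_sq_mul (hε : 0 < ε) (x : E) :
    regKernel c ε x ^ 2 * (‖x - c‖ ^ 2 + ε ^ 2) = 1 := by
  rw [regKernel, inv_pow, Real.sq_sqrt (by positivity), inv_mul_cancel₀ (by positivity)]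

theorem regKernel_le_inv_norm {x : E} (hx : x ≠ c) : regKernel c ε x ≤ ‖x - c‖⁻¹ := by
  have : 0 < ‖x - c‖ := norm_sub_pos_iff.2 hx
  exact inv_anti₀ this (Real.le_sqrt_of_sq_le (le_add_of_nonneg_right (sq_nonneg ε)))

theorem one_le_mul_regKernel_pow {x : E} (hx : x ∈ ball c ε) :
    1 ≤ 105 / 2 * (ε * regKernel c ε x) ^ 9 := by
  have hε : 0 < ε := dist_nonneg.trans_lt hx
  have hτ := regKernel_pos (c := c) hε x
  have hdist : ‖x - c‖ ^ 2 ≤ ε ^ 2 := by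
    rw [← dist_eq_norm]
    gcongr
    exact (mem_ball.1 hx).le
  have hsq : 1 / 2 ≤ (ε * regKernel c ε x) ^ 2 := by
    nlinarith [regKernel_sq_mul (c := c) hε x, sq_nonneg (regKernel c ε x)]
  have hroot : 7 / 10 ≤ ε * regKernel c ε x := by
    refine le_of_sq_le_sq ?_ (by positivity)
    linarith
  calc (1 : ℝ) ≤ 105 / 2 * (7 / 10) ^ 9 := by norm_num
    _ ≤ _ := by gcongr

variable [InnerProductSpace ℝ E]

theorem contDiff_regKernel {n : WithTop ℕ∞} (hε : 0 < ε) : ContDiff ℝ n (regKernel c ε) :=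
  (((contDiff_id.sub contDiff_const).norm_sq ℝ |>.add contDiff_const).sqrt
    fun x => (by positivity : (0 : ℝ) < ‖x - c‖ ^ 2 + ε ^ 2).ne').inv fun x => by positivity

theorem continuous_regKernel (hε : 0 < ε) : Continuous (regKernel c ε) :=
  (contDiff_regKernel (n := 0) hε).continuous

theorem hasFDerivAt_regKernel_pow (hε : 0 < ε) (k : ℕ) (x : E) :
    HasFDerivAt (fun y => regKernel c ε y ^ k)
      (-(k * regKernel c ε x ^ (k + 2)) • innerSL ℝ (x - c)) x := by
  have hpos : 0 < ‖x - c‖ ^ 2 + ε ^ 2 := by positivity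
  have hsq : HasFDerivAt (fun y => ‖y - c‖ ^ 2 + ε ^ 2) (2 • innerSL ℝ (x - c)) x := by
    simpa using ((hasFDerivAt_id x).sub_const c).norm_sq.add_const (ε ^ 2)
  have hinv_sqrt : HasDerivAt (fun s => (√s)⁻¹) (-(regKernel c ε x ^ 3) / 2)
      (‖x - c‖ ^ 2 + ε ^ 2) := by
    refine ((Real.hasDerivAt_sqrt hpos.ne').fun_inv (Real.sqrt_pos.2 hpos).ne').congr_deriv ?_
    unfold regKernel
    field_simp
  have hkernel : HasFDerivAt (regKernel c ε) (-(regKernel c ε x ^ 3) • innerSL ℝ (x - c)) x := by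
    refine (hinv_sqrt.comp_hasFDerivAt x hsq).congr_fderiv ?_
    module
  refine (hkernel.pow k).congr_fderiv ?_
  rcases k with _ | k
  · simp
  · simp only [smul_smul, Nat.add_sub_cancel, Nat.cast_add, Nat.cast_one]
    congr 1
    ring

variable [FiniteDimensional ℝ E]

theorem laplacian_regKernel_pow (hε : 0 < ε) (k : ℕ) (x : E) :
    Δ (fun y => regKernel c ε y ^ k) x =
      k * (k + 2 - Module.finrank ℝ E) * regKernel c ε x ^ (k + 2) -
        k * (k + 2) * ε ^ 2 * regKernel c ε x ^ (k + 4) := by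
  let b := stdOrthonormalBasis ℝ E
  have first_order (v : E) : (fun y => fderiv ℝ (fun z => regKernel c ε z ^ k) y v) =
      fun y => -(k * (regKernel c ε y ^ (k + 2) * ⟪y - c, v⟫)) := by
    ext y
    simp only [(hasFDerivAt_regKernel_pow hε k y).fderiv, smul_apply, innerSL_apply_apply,
      smul_eq_mul, neg_mul, mul_assoc]
  have second_order (v : E) :
      fderiv ℝ (fun y => -(k * (regKernel c ε y ^ (k + 2) * ⟪y - c, v⟫))) x v =
        k * (k + 2) * regKernel c ε x ^ (k + 4) * ⟪x - c, v⟫ ^ 2 -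
          k * regKernel c ε x ^ (k + 2) * ‖v‖ ^ 2 := by
    have hinner : HasFDerivAt (fun y => ⟪y - c, v⟫) (innerSL ℝ v) x := by
      refine (((hasFDerivAt_id x).sub_const c).inner ℝ (hasFDerivAt_const v x)).congr_fderiv ?_
      ext y
      simp [fderivInnerCLM_apply, real_inner_comm]
    have hderiv :=
      (((hasFDerivAt_regKernel_pow (c := c) hε (k + 2) x).fun_mul hinner).const_mul (k : ℝ)).fun_neg
    rw [hderiv.fderiv]
    simp only [neg_apply, add_apply, smul_apply, innerSL_apply_apply, smul_eq_mul,
      real_inner_self_eq_norm_sq]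
    push_cast
    ring
  have trace : ∑ i, ⟪x - c, b i⟫ ^ 2 = ‖x - c‖ ^ 2 := by
    simpa using b.sum_sq_norm_inner_left (x - c)
  rw [laplacian_eq_sum_fderiv_fderiv b ((contDiff_regKernel hε).pow k).contDiffAt]
  simp only [first_order, second_order, Finset.sum_sub_distrib, ← Finset.mul_sum, trace,
    b.norm_eq_one, one_pow, Finset.sum_const, Finset.card_univ, Fintype.card_fin, nsmul_eq_mul]
  linear_combination k * (k + 2) * regKernel c ε x ^ (k + 2) * regKernel_sq_mul (c := c) hε x

theorem laplacian_regKernel (hε : 0 < ε) (x : E) :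
    Δ (regKernel c ε) x = (3 - Module.finrank ℝ E) * regKernel c ε x ^ 3 -
      3 * ε ^ 2 * regKernel c ε x ^ 5 := by
  have := laplacian_regKernel_pow (c := c) hε 1 x
  simp only [pow_one] at this
  rw [this]
  norm_num

theorem bilaplacian_regKernel (hε : 0 < ε) (x : E) :
    Δ (Δ (regKernel c ε)) x =
      3 * (Module.finrank ℝ E - 3) * (Module.finrank ℝ E - 5) * regKernel c ε x ^ 5 +
        30 * (Module.finrank ℝ E - 5) * ε ^ 2 * regKernel c ε x ^ 7 +
          105 * ε ^ 4 * regKernel c ε x ^ 9 := by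
  have hsmooth (k : ℕ) (a : ℝ) : ContDiffAt ℝ 2 (a • fun y => regKernel c ε y ^ k) x :=
    (((contDiff_regKernel hε).pow k).const_smul a).contDiffAt
  have hΔ : Δ (regKernel c ε) = ((3 - Module.finrank ℝ E : ℝ) • fun y => regKernel c ε y ^ 3) -
      ((3 * ε ^ 2) • fun y => regKernel c ε y ^ 5) := funext (laplacian_regKernel hε)
  have hpow (k : ℕ) : ContDiffAt ℝ 2 (fun y => regKernel c ε y ^ k) x :=
    ((contDiff_regKernel hε).pow k).contDiffAt
  rw [hΔ, (hsmooth 3 _).laplacian_sub (hsmooth 5 _), InnerProductSpace.laplacian_smul _ (hpow 3),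
    InnerProductSpace.laplacian_smul _ (hpow 5), laplacian_regKernel_pow hε,
    laplacian_regKernel_pow hε]
  simp only [smul_eq_mul]
  push_cast
  ring

theorem le_bilaplacian_regKernel (hd : 5 ≤ Module.finrank ℝ E) (hε : 0 < ε) (x : E) :
    105 * ε ^ 4 * regKernel c ε x ^ 9 ≤ Δ (Δ (regKernel c ε)) x := by
  have hτ := regKernel_pos (c := c) hε x
  have hd' : (0 : ℝ) ≤ Module.finrank ℝ E - 5 := sub_nonneg.2 (by exact_mod_cast hd)
  rw [bilaplacian_regKernel hε]
  have : 0 ≤ 3 * ((Module.finrank ℝ E - 5) + 2) * (Module.finrank ℝ E - 5) *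
      regKernel c ε x ^ 5 +
    30 * (Module.finrank ℝ E - 5) * ε ^ 2 * regKernel c ε x ^ 7 := by positivity
  linarith

-- Completing the square in `q` reduces this to `|∇τ|² / τ ≤ -Δτ` for the kernel `τ`.
theorem regKernel_quadratic_form_nonneg (hd : 4 ≤ Module.finrank ℝ E) (hε : 0 < ε) (x p : E)
    (q : ℝ) : 0 ≤ regKernel c ε x * q ^ 2 + 2 * q * ⟪p, ∇ (regKernel c ε) x⟫ -
      ‖p‖ ^ 2 * Δ (regKernel c ε) x := by
  set τ := regKernel c ε x
  have hτ : 0 < τ := regKernel_pos hε x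
  have hgrad : ⟪p, ∇ (regKernel c ε) x⟫ = -τ ^ 3 * ⟪x - c, p⟫ := by
    have h := (hasFDerivAt_regKernel_pow (c := c) hε 1 x).fderiv
    simp only [pow_one] at h
    simp only [inner_gradient_right, h, τ, smul_apply, innerSL_apply_apply, smul_eq_mul]
    norm_num
  have cauchy_schwarz : τ ^ 2 * ⟪x - c, p⟫ ^ 2 ≤ ‖p‖ ^ 2 := calc
    τ ^ 2 * ⟪x - c, p⟫ ^ 2 ≤ τ ^ 2 * (‖x - c‖ ^ 2 * ‖p‖ ^ 2) := by
      rw [← mul_pow ‖x - c‖, ← sq_abs ⟪x - c, p⟫]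
      gcongr
      exact abs_real_inner_le_norm _ _
    _ ≤ τ ^ 2 * ((‖x - c‖ ^ 2 + ε ^ 2) * ‖p‖ ^ 2) := by
      gcongr
      exact le_add_of_nonneg_right (sq_nonneg ε)
    _ = ‖p‖ ^ 2 := by rw [← mul_assoc, regKernel_sq_mul hε, one_mul]
  have superharmonic : τ ^ 3 ≤ -Δ (regKernel c ε) x := by
    have hd' : (4 : ℝ) ≤ Module.finrank ℝ E := by exact_mod_cast hd
    rw [laplacian_regKernel hε]
    have : 0 ≤ (Module.finrank ℝ E - 4) * τ ^ 3 + 3 * ε ^ 2 * τ ^ 5 := by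
      have := sub_nonneg.2 hd'
      positivity
    linarith
  calc (0 : ℝ) ≤ τ * (q - τ ^ 2 * ⟪x - c, p⟫) ^ 2 := by positivity
    _ = τ * q ^ 2 + 2 * q * (-τ ^ 3 * ⟪x - c, p⟫) + τ ^ 3 * (τ ^ 2 * ⟪x - c, p⟫ ^ 2) := by ring
    _ ≤ τ * q ^ 2 + 2 * q * (-τ ^ 3 * ⟪x - c, p⟫) + τ ^ 3 * ‖p‖ ^ 2 := by gcongr
    _ ≤ τ * q ^ 2 + 2 * q * (-τ ^ 3 * ⟪x - c, p⟫) + -Δ (regKernel c ε) x * ‖p‖ ^ 2 := by gcongr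
    _ = _ := by rw [hgrad]; ring

theorem setIntegral_regKernel_pow_mul_sq_le [MeasurableSpace E] [BorelSpace E] {μ : Measure E}
    [μ.IsAddHaarMeasure] {Ω : Set E} {w : E → ℝ} (hd : 5 ≤ Module.finrank ℝ E) (hε : 0 < ε)
    (hΩ : IsOpen Ω) (hΩb : Bornology.IsBounded Ω) (hμ : μ (frontier Ω) = 0)
    (hw : ∀ x ∈ closure Ω, ContDiffAt ℝ 4 w x) (hw₀ : ∀ x ∈ frontier Ω, w x = 0)
    (hw₁ : ∀ x ∈ frontier Ω, fderiv ℝ w x = 0) (c : E) :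
    ∫ x in Ω, 105 / 2 * ε ^ 4 * regKernel c ε x ^ 9 * w x ^ 2 ∂μ ≤
      ∫ x in Ω, regKernel c ε x * (w x * Δ (Δ w) x) ∂μ := by
  simp only [← mul_assoc, mul_comm (regKernel c ε _) (w _)]
  have identity := setIntegral_mul_bilaplacian_sub_eq hΩ hΩb hμ hw
    (fun x _ => (contDiff_regKernel (c := c) hε).contDiffAt) hw₀ hw₁
  have energy_nonneg := setIntegral_nonneg (μ := μ) hΩ.measurableSet fun x _ =>
    regKernel_quadratic_form_nonneg (c := c) ((Nat.le_succ 4).trans hd) hε x (∇ w x) (Δ w x)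
  have bilaplacian_le : ∫ x in Ω, 105 / 2 * ε ^ 4 * regKernel c ε x ^ 9 * w x ^ 2 ∂μ ≤
      (∫ x in Ω, w x ^ 2 * Δ (Δ (regKernel c ε)) x ∂μ) / 2 := by
    rw [← integral_div]
    refine setIntegral_mono_on ?_ ?_ hΩ.measurableSet fun x _ => ?_
    · exact integrableOn_of_forall_closure_continuousAt hΩb fun x hx =>
        (continuousAt_const.mul ((continuous_regKernel hε).continuousAt.pow 9)).mul
          ((hw x hx).continuousAt.pow 2)
    · have hΔ (x : E) : ContDiffAt ℝ 2 (Δ (regKernel c ε)) x :=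
        contDiffAt_laplacian (n := 4) (contDiff_regKernel hε).contDiffAt (by norm_num)
      exact integrableOn_of_forall_closure_continuousAt hΩb fun x hx =>
        (((hw x hx).continuousAt.pow 2).mul
          (contDiffAt_laplacian (m := 0) (hΔ x) (by simp)).continuousAt).div_const 2
    · linarith [mul_le_mul_of_nonneg_right (le_bilaplacian_regKernel (c := c) hd hε x)
        (sq_nonneg (w x))]
  linarith

end RegularizedKernel

section NewtonPotential

variable {E : Type*} [NormedAddCommGroup E]

theorem inv_norm_le_one_add_indicator_ball (x : E) :
    ‖x‖⁻¹ ≤ 1 + (ball 0 1).indicator (fun x : E => ‖x‖⁻¹) x := by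
  by_cases hx : x ∈ ball (0 : E) 1
  · rw [Set.indicator_of_mem hx]
    exact le_add_of_nonneg_left zero_le_one
  · rw [Set.indicator_of_notMem hx, add_zero]
    exact inv_le_one_of_one_le₀ (by simpa using hx)

variable [MeasurableSpace E] [BorelSpace E] {μ : Measure E} [μ.IsAddHaarMeasure]

theorem eventually_forall_setIntegral_sub_right_lt {f : E → ℝ} (hf : Integrable f μ) {κ : ℝ}
    (hκ : 0 < κ) : ∀ᶠ s in comap μ (𝓝 0), ∀ c, ∫ x in s, f (x - c) ∂μ < κ := by
  have small := (hf.tendsto_setIntegral_nhds_zero (l := comap μ (𝓝 0)) (s := id)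
    tendsto_comap).eventually_lt_const hκ
  refine eventually_comap.2 ((eventually_comap.1 small).mono fun r hr s hs c => ?_)
  have hpre := (measurePreserving_sub_right μ c).setIntegral_preimage_emb
    (measurableEmbedding_subRight c) f ((· + c) ⁻¹' s)
  rw [← Set.preimage_comp] at hpre
  simp only [Function.comp_def, sub_add_cancel, Set.preimage_id'] at hpre
  rw [hpre]
  exact hr ((· + c) ⁻¹' s) ((measure_preimage_add_right μ c s).trans hs)

variable [NormedSpace ℝ E] [FiniteDimensional ℝ E]

theorem integrable_indicator_ball_inv_norm (hd : 2 ≤ Module.finrank ℝ E) :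
    Integrable ((ball 0 1).indicator fun x : E => ‖x‖⁻¹) μ := by
  refine (integrable_indicator_iff measurableSet_ball).2 ?_
  refine integrableOn_ball_of_norm_le_rpow (C := 1) (α := 1) (one_le_two.trans hd)
    (by exact_mod_cast hd) (Eventually.of_forall fun x => ?_) (by fun_prop)
  rw [Real.rpow_neg_one, one_mul, norm_inv, norm_norm]

theorem integrableOn_one_add_indicator_ball_inv_norm_sub (hd : 2 ≤ Module.finrank ℝ E) {s : Set E}
    (hs : μ s ≠ ∞) (c : E) :
    IntegrableOn (fun x => 1 + (ball 0 1).indicator (fun y : E => ‖y‖⁻¹) (x - c)) s μ :=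
  (integrableOn_const hs).add
    ((integrable_indicator_ball_inv_norm hd).comp_sub_right c).integrableOn

theorem integrableOn_inv_norm_sub (hd : 2 ≤ Module.finrank ℝ E) {s : Set E} (hs : μ s ≠ ∞) (c : E) :
    IntegrableOn (fun x => ‖x - c‖⁻¹) s μ :=
  (integrableOn_one_add_indicator_ball_inv_norm_sub hd hs c).mono' (by fun_prop) <|
    Eventually.of_forall fun x => by
      simpa using inv_norm_le_one_add_indicator_ball (x - c)

theorem eventually_forall_setIntegral_inv_norm_sub_le (hd : 2 ≤ Module.finrank ℝ E) {κ : ℝ}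
    (hκ : 0 < κ) : ∀ᶠ s in comap μ (𝓝 0), ∀ c, ∫ x in s, ‖x - c‖⁻¹ ∂μ ≤ κ := by
  have finite : ∀ᶠ s in comap μ (𝓝 0), μ s < ∞ :=
    tendsto_comap.eventually_lt_const ENNReal.zero_lt_top
  have small : ∀ᶠ s in comap μ (𝓝 0), μ.real s < κ / 2 :=
    ((ENNReal.tendsto_toReal ENNReal.zero_ne_top).comp tendsto_comap).eventually_lt_const
      (by simpa using hκ)
  filter_upwards [finite, small, eventually_forall_setIntegral_sub_right_lt
    (integrable_indicator_ball_inv_norm (μ := μ) hd) (half_pos hκ)] with s hs_finite hs hs_int c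
  have hone : Integrable (fun _ => (1 : ℝ)) (μ.restrict s) := integrableOn_const hs_finite.ne
  calc ∫ x in s, ‖x - c‖⁻¹ ∂μ
      ≤ ∫ x in s, 1 + (ball 0 1).indicator (fun y : E => ‖y‖⁻¹) (x - c) ∂μ :=
        setIntegral_mono (integrableOn_inv_norm_sub hd hs_finite.ne c)
          (integrableOn_one_add_indicator_ball_inv_norm_sub hd hs_finite.ne c) fun x =>
            inv_norm_le_one_add_indicator_ball (x - c)
    _ = μ.real s + ∫ x in s, (ball 0 1).indicator (fun y : E => ‖y‖⁻¹) (x - c) ∂μ := by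
        rw [integral_add hone
          ((integrable_indicator_ball_inv_norm hd).comp_sub_right c).integrableOn]
        simp
    _ ≤ κ := by linarith [hs_int c]

end NewtonPotential

section SupEstimate

variable {E : Type*} [NormedAddCommGroup E] [InnerProductSpace ℝ E] [FiniteDimensional ℝ E]
  [MeasurableSpace E] [BorelSpace E] {μ : Measure E} [μ.IsAddHaarMeasure] {Ω : Set E} {C κ : ℝ}

theorem sq_mul_measureReal_ball_le {w : E → ℝ} {c : E} {ε M : ℝ} (hε : 0 < ε) (hM : 0 ≤ M)
    (hΩb : Bornology.IsBounded Ω) (hw : ∀ x ∈ closure Ω, ContinuousAt w x) (hball : ball c ε ⊆ Ω)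
    (hMw : ∀ x ∈ ball c ε, M ≤ |w x|) :
    M ^ 2 * μ.real (ball c ε) ≤
      ε ^ 5 * ∫ x in Ω, 105 / 2 * ε ^ 4 * regKernel c ε x ^ 9 * w x ^ 2 ∂μ := by
  have hint : IntegrableOn (fun x => 105 / 2 * ε ^ 4 * regKernel c ε x ^ 9 * w x ^ 2) Ω μ :=
    integrableOn_of_forall_closure_continuousAt hΩb fun x hx =>
      (continuousAt_const.mul ((continuous_regKernel hε).continuousAt.pow 9)).mul
        ((hw x hx).pow 2)
  rw [← integral_const_mul]
  refine (setIntegral_ge_of_const_le_real measurableSet_ball measure_ball_lt_top.ne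
    (fun x hx => ?_) ((hint.mono_set hball).const_mul _)).trans
      (setIntegral_mono_set (hint.const_mul _) ?_ hball.eventuallyLE)
  · calc M ^ 2 ≤ |w x| ^ 2 := by gcongr; exact hMw x hx
      _ ≤ 105 / 2 * (ε * regKernel c ε x) ^ 9 * |w x| ^ 2 :=
        le_mul_of_one_le_left (sq_nonneg _) (one_le_mul_regKernel_pow hx)
      _ = _ := by rw [sq_abs]; ring
  · refine Eventually.of_forall fun x => ?_
    have := regKernel_pos (c := c) hε x
    simp only [Pi.zero_apply]
    positivity

theorem abs_setIntegral_regKernel_mul_le {f : E → ℝ} {ε : ℝ} (hd : 2 ≤ Module.finrank ℝ E)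
    (hΩ : IsOpen Ω) (hΩb : Bornology.IsBounded Ω) (hf : ∀ x ∈ Ω, |f x| ≤ C) (c : E) :
    |∫ x in Ω, regKernel c ε x * f x ∂μ| ≤ C * ∫ x in Ω, ‖x - c‖⁻¹ ∂μ := by
  have : Nontrivial E := Module.nontrivial_of_finrank_pos (zero_lt_two.trans_le hd)
  rw [← integral_const_mul, ← Real.norm_eq_abs]
  refine norm_integral_le_of_norm_le
    ((integrableOn_inv_norm_sub hd hΩb.measure_lt_top.ne c).const_mul C) ?_
  filter_upwards [ae_restrict_mem hΩ.measurableSet, ae_restrict_of_ae (Measure.ae_ne μ c)]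
    with x hx hxc
  rw [norm_mul, Real.norm_eq_abs, Real.norm_eq_abs, mul_comm, abs_of_nonneg (regKernel_nonneg x)]
  exact mul_le_mul (hf x hx) (regKernel_le_inv_norm hxc) (regKernel_nonneg x)
    ((abs_nonneg _).trans (hf x hx))

variable {w : E → ℝ}

theorem abs_mul_measureReal_ball_le_of_isMaxOn (hd : Module.finrank ℝ E = 5) (hΩ : IsOpen Ω)
    (hΩb : Bornology.IsBounded Ω) (hμ : μ (frontier Ω) = 0)
    (hw : ∀ x ∈ closure Ω, ContDiffAt ℝ 4 w x) (hw₀ : ∀ x ∈ frontier Ω, w x = 0)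
    (hw₁ : ∀ x ∈ frontier Ω, fderiv ℝ w x = 0) (hC : ∀ x ∈ Ω, |Δ (Δ w) x| ≤ C)
    (hκ : ∀ c, ∫ x in Ω, ‖x - c‖⁻¹ ∂μ ≤ κ) {c : E} (hc : c ∈ Ω)
    (hmax : IsMaxOn (fun x => |w x|) Ω c) (hwc : 0 < |w c|) :
    |w c| * μ.real (ball 0 1) ≤ 4 * (C * κ) := by
  have : Nontrivial E := Module.nontrivial_of_finrank_pos (R := ℝ) (by simp [hd])
  have hC₀ : 0 ≤ C := (abs_nonneg _).trans (hC c hc)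
  have hnear : ∀ᶠ x in 𝓝 c, x ∈ Ω ∧ |w c| / 2 < |w x| :=
    (hΩ.eventually_mem hc).and <| (hw c (subset_closure hc)).continuousAt.abs.eventually_const_lt
      (half_lt_self hwc)
  obtain ⟨ε, hε, hball⟩ := Metric.eventually_nhds_iff_ball.1 hnear
  have hvol : μ.real (ball c ε) = ε ^ 5 * μ.real (ball 0 1) := by
    rw [← Measure.addHaar_real_closedBall_eq_addHaar_real_ball μ c,
      Measure.addHaar_real_closedBall μ c hε.le, hd]
  have hwΔ : ∀ x ∈ Ω, |w x * Δ (Δ w) x| ≤ |w c| * C := fun x hx => by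
    rw [abs_mul]
    exact mul_le_mul (hmax hx) (hC x hx) (abs_nonneg _) hwc.le
  have key : (|w c| / 2) ^ 2 * μ.real (ball c ε) ≤ ε ^ 5 * (|w c| * C * κ) := by
    calc (|w c| / 2) ^ 2 * μ.real (ball c ε)
        ≤ ε ^ 5 * ∫ x in Ω, 105 / 2 * ε ^ 4 * regKernel c ε x ^ 9 * w x ^ 2 ∂μ :=
          sq_mul_measureReal_ball_le hε (half_pos hwc).le hΩb (fun x hx => (hw x hx).continuousAt)
            (fun x hx => (hball x hx).1) fun x hx => (hball x hx).2.le
      _ ≤ ε ^ 5 * ∫ x in Ω, regKernel c ε x * (w x * Δ (Δ w) x) ∂μ :=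
          mul_le_mul_of_nonneg_left
            (setIntegral_regKernel_pow_mul_sq_le hd.ge hε hΩ hΩb hμ hw hw₀ hw₁ c) (by positivity)
      _ ≤ ε ^ 5 * (|w c| * C * κ) := by
          gcongr
          refine (le_abs_self _).trans
            ((abs_setIntegral_regKernel_mul_le (by simp [hd]) hΩ hΩb hwΔ c).trans ?_)
          gcongr
          exact hκ c
  have hfactor : 0 < ε ^ 5 * |w c| := by positivity
  rw [hvol] at key
  refine le_of_mul_le_mul_left ?_ hfactor
  linarith

theorem abs_mul_measureReal_ball_le (hd : Module.finrank ℝ E = 5) (hΩ : IsOpen Ω)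
    (hΩb : Bornology.IsBounded Ω) (hμ : μ (frontier Ω) = 0)
    (hw : ∀ x ∈ closure Ω, ContDiffAt ℝ 4 w x) (hw₀ : ∀ x ∈ frontier Ω, w x = 0)
    (hw₁ : ∀ x ∈ frontier Ω, fderiv ℝ w x = 0) (hC : ∀ x ∈ Ω, |Δ (Δ w) x| ≤ C)
    (hκ : ∀ c, ∫ x in Ω, ‖x - c‖⁻¹ ∂μ ≤ κ) {x : E} (hx : x ∈ Ω) :
    |w x| * μ.real (ball 0 1) ≤ 4 * (C * κ) := by
  have hcont : ContinuousOn (fun y => |w y|) (closure Ω) := fun y hy =>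
    (hw y hy).continuousAt.abs.continuousWithinAt
  obtain ⟨c, hc, hmax⟩ := hΩb.isCompact_closure.exists_isMaxOn ⟨x, subset_closure hx⟩ hcont
  have hxc : |w x| ≤ |w c| := hmax (subset_closure hx)
  rcases (abs_nonneg (w x)).eq_or_lt with hwx | hwx
  · have hC₀ : 0 ≤ C := (abs_nonneg _).trans (hC x hx)
    have hκ₀ : 0 ≤ κ := (integral_nonneg fun y => by positivity).trans (hκ x)
    rw [← hwx, zero_mul]
    positivity
  · have hwc : 0 < |w c| := hwx.trans_le hxc
    have hcΩ : c ∈ Ω := by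
      by_contra hcΩ
      exact abs_pos.1 hwc (hw₀ c (hΩ.frontier_eq ▸ ⟨hc, hcΩ⟩))
    exact (mul_le_mul_of_nonneg_right hxc measureReal_nonneg).trans <|
      abs_mul_measureReal_ball_le_of_isMaxOn hd hΩ hΩb hμ hw hw₀ hw₁ hC hκ hcΩ
        (hmax.on_subset subset_closure) hwc

theorem norm_mul_measureReal_ball_le {F : Type*} [NormedAddCommGroup F] [NormedSpace ℝ F]
    {w : E → F} (hd : Module.finrank ℝ E = 5) (hΩ : IsOpen Ω) (hΩb : Bornology.IsBounded Ω)
    (hμ : μ (frontier Ω) = 0) (hw : ∀ x ∈ closure Ω, ContDiffAt ℝ 4 w x)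
    (hw₀ : ∀ x ∈ frontier Ω, w x = 0) (hw₁ : ∀ x ∈ frontier Ω, fderiv ℝ w x = 0)
    (hC : ∀ x ∈ Ω, ‖Δ (Δ w) x‖ ≤ C) (hκ : ∀ c, ∫ x in Ω, ‖x - c‖⁻¹ ∂μ ≤ κ) {x : E} (hx : x ∈ Ω) :
    ‖w x‖ * μ.real (ball 0 1) ≤ 4 * (C * κ) := by
  obtain ⟨g, hg, hgx⟩ := exists_dual_vector'' ℝ (w x)
  have hgw : ∀ y ∈ closure Ω, ContDiffAt ℝ 4 (g ∘ w) y := fun y hy =>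
    g.contDiff.contDiffAt.comp y (hw y hy)
  have hgw₁ : ∀ y ∈ frontier Ω, fderiv ℝ (g ∘ w) y = 0 := fun y hy => by
    rw [fderiv_comp y g.differentiableAt
      ((hw y (frontier_subset_closure hy)).differentiableAt (by simp)), hw₁ y hy,
      ContinuousLinearMap.comp_zero]
  have hgC : ∀ y ∈ Ω, |Δ (Δ (g ∘ w)) y| ≤ C := fun y hy => by
    have hwy := hw y (subset_closure hy)
    have hΔ : ContDiffAt ℝ 2 (Δ w) y := contDiffAt_laplacian hwy (by norm_num)
    rw [(InnerProductSpace.laplacian_congr_nhds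
      (hwy.of_le (by norm_num)).laplacian_CLM_comp_left_nhds).eq_of_nhds,
      hΔ.laplacian_CLM_comp_left]
    simpa using (g.le_of_opNorm_le hg _).trans ((one_mul _).trans_le (hC y hy))
  simpa [hgx] using abs_mul_measureReal_ball_le hd hΩ hΩb hμ hgw
    (fun y hy => by simp [hw₀ y hy]) hgw₁ hgC hκ hx

end SupEstimate

section Annulus

variable {E : Type*} [NormedAddCommGroup E]

theorem norm_eq_or_norm_eq_of_mem_frontier {a b : ℝ} {x : E}
    (hx : x ∈ frontier (norm ⁻¹' Set.Ioo a b)) : ‖x‖ = a ∨ ‖x‖ = b := by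
  have hfr : ‖x‖ ∈ frontier (Set.Ioo a b) := continuous_norm.frontier_preimage_subset _ hx
  have hab : a < b := Set.nonempty_Ioo.1 (closure_nonempty_iff.1 ⟨_, frontier_subset_closure hfr⟩)
  rwa [frontier_Ioo hab] at hfr

theorem closure_norm_preimage_Ioo_subset (a b : ℝ) :
    closure (norm ⁻¹' Set.Ioo a b : Set E) ⊆ norm ⁻¹' Set.Icc a b :=
  closure_minimal (Set.preimage_mono Set.Ioo_subset_Icc_self)
    (isClosed_Icc.preimage continuous_norm)

theorem isBounded_norm_preimage_Ioo (a b : ℝ) :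
    Bornology.IsBounded (norm ⁻¹' Set.Ioo a b : Set E) :=
  isBounded_ball.subset fun _ hx => mem_ball_zero_iff.2 hx.2

variable [NormedSpace ℝ E] [FiniteDimensional ℝ E] [MeasurableSpace E] [BorelSpace E]
  (μ : Measure E) [μ.IsAddHaarMeasure]

theorem measure_frontier_norm_preimage_Ioo [Nontrivial E] (a b : ℝ) :
    μ (frontier (norm ⁻¹' Set.Ioo a b)) = 0 := by
  refine measure_mono_null (t := sphere 0 a ∪ sphere 0 b) (fun x hx => ?_)
    (measure_union_null (Measure.addHaar_sphere μ 0 a) (Measure.addHaar_sphere μ 0 b))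
  simpa using norm_eq_or_norm_eq_of_mem_frontier hx

theorem tendsto_norm_preimage_Ioo_comap_measure {ρ : ℝ} (hρ : 0 < ρ) :
    Tendsto (fun η => norm ⁻¹' Set.Ioo (ρ * (1 - η)) ρ) (𝓝[>] 0) (comap μ (𝓝 0)) := by
  have hempty : ⋂ η > (0 : ℝ), (norm ⁻¹' Set.Ioo (ρ * (1 - η)) ρ : Set E) = ∅ := by
    refine Set.eq_empty_of_forall_notMem fun x hx => ?_
    have hmem : ∀ η > (0 : ℝ), ρ * (1 - η) < ‖x‖ ∧ ‖x‖ < ρ := by simpa using hx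
    have hxρ : ‖x‖ < ρ := (hmem 1 one_pos).2
    have hthin := (hmem (1 - ‖x‖ / ρ) (sub_pos.2 ((div_lt_one hρ).2 hxρ))).1
    rw [sub_sub_cancel, mul_div_cancel₀ _ hρ.ne'] at hthin
    exact hthin.false
  refine tendsto_comap_iff.2 ?_
  rw [← measure_empty (μ := μ), ← hempty]
  refine tendsto_measure_biInter_gt
    (fun η _ => (isOpen_Ioo.preimage continuous_norm).nullMeasurableSet) (fun η η' _ hη => ?_)
    ⟨1, one_pos, (isBounded_norm_preimage_Ioo _ _).measure_lt_top.ne⟩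
  exact Set.preimage_mono (Set.Ioo_subset_Ioo_left (by gcongr))

end Annulus

-- `w` vanishes after the retraction `y ↦ (‖x‖ / ‖y‖) • y` onto the sphere, whose derivative at `x`
-- differs from the identity by a map into the radial line.
theorem fderiv_eq_zero_of_eq_zero_on_sphere {E F : Type*} [NormedAddCommGroup E]
    [InnerProductSpace ℝ E] [NormedAddCommGroup F] [NormedSpace ℝ F] {w : E → F} {x : E}
    (hx : x ≠ 0) (hw : DifferentiableAt ℝ w x) (hw₀ : ∀ y, ‖y‖ = ‖x‖ → w y = 0)
    (hrad : fderiv ℝ w x x = 0) : fderiv ℝ w x = 0 := by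
  have hx' : ‖x‖ ≠ 0 := norm_ne_zero_iff.2 hx
  let scale (y : E) : ℝ := ‖x‖ * ‖y‖⁻¹
  have hscale : HasFDerivAt scale (fderiv ℝ scale x) x :=
    (((differentiableAt_id.norm ℝ hx).inv hx').const_mul ‖x‖).hasFDerivAt
  have hscale_x : scale x = 1 := mul_inv_cancel₀ hx'
  have hproj := hscale.smul (hasFDerivAt_id x)
  have hw' : HasFDerivAt w (fderiv ℝ w x) (scale x • id x) := by
    rw [hscale_x, one_smul]
    exact hw.hasFDerivAt
  have hconst : (fun y => w (scale y • y)) =ᶠ[𝓝 x] fun _ => 0 := by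
    filter_upwards [isOpen_ne.mem_nhds hx] with y hy
    refine hw₀ _ ?_
    rw [norm_smul, norm_mul, norm_inv, norm_norm, norm_norm, mul_assoc,
      inv_mul_cancel₀ (norm_ne_zero_iff.2 hy), mul_one]
  have hcomp := ((hw'.comp (f := fun y => scale y • y) x hproj).congr_of_eventuallyEq
    hconst.symm).unique (hasFDerivAt_const 0 x)
  ext v
  simpa [hscale_x, hrad] using DFunLike.congr_fun hcomp v

section ThinAnnulus

variable {E F : Type*} [NormedAddCommGroup E] [InnerProductSpace ℝ E]
  [NormedAddCommGroup F] [NormedSpace ℝ F]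

theorem fderiv_sub_eq_zero_of_eq_on_sphere {u v : E → F} {x : E} (hx : x ≠ 0)
    (hu : DifferentiableAt ℝ u x) (hv : DifferentiableAt ℝ v x)
    (hval : ∀ y, ‖y‖ = ‖x‖ → v y = u y)
    (hrad : fderiv ℝ v x (‖x‖⁻¹ • x) = fderiv ℝ u x (‖x‖⁻¹ • x)) :
    fderiv ℝ (v - u) x = 0 := by
  refine fderiv_eq_zero_of_eq_zero_on_sphere hx (hv.sub hu) (fun y hy => by simp [hval y hy]) ?_
  simpa [fderiv_sub hv hu, hx, sub_eq_zero] using hrad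

variable [FiniteDimensional ℝ E]

theorem norm_sub_mul_measureReal_ball_le_of_biharmonic_on_annulus [MeasurableSpace E]
    [BorelSpace E] {μ : Measure E} [μ.IsAddHaarMeasure] (hd : Module.finrank ℝ E = 5) {u v : E → F}
    {a b C κ : ℝ} (ha : 0 < a) (hu : ∀ x, a ≤ ‖x‖ → ‖x‖ ≤ b → ContDiffAt ℝ 4 u x)
    (hv : ∀ x, a ≤ ‖x‖ → ‖x‖ ≤ b → ContDiffAt ℝ 4 v x)
    (hΔv : ∀ x, a < ‖x‖ → ‖x‖ < b → Δ (Δ v) x = 0)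
    (hval : ∀ x, ‖x‖ = b ∨ ‖x‖ = a → v x = u x)
    (hrad : ∀ x, ‖x‖ = b ∨ ‖x‖ = a → fderiv ℝ v x (‖x‖⁻¹ • x) = fderiv ℝ u x (‖x‖⁻¹ • x))
    (hC : ∀ x, a < ‖x‖ → ‖x‖ < b → ‖Δ (Δ u) x‖ ≤ C)
    (hκ : ∀ c, ∫ x in norm ⁻¹' Set.Ioo a b, ‖x - c‖⁻¹ ∂μ ≤ κ) {x : E} (hxa : a < ‖x‖)
    (hxb : ‖x‖ < b) : ‖v x - u x‖ * μ.real (ball 0 1) ≤ 4 * (C * κ) := by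
  have : Nontrivial E := Module.nontrivial_of_finrank_pos (R := ℝ) (by simp [hd])
  have hcl {y : E} (hy : y ∈ closure (norm ⁻¹' Set.Ioo a b)) : a ≤ ‖y‖ ∧ ‖y‖ ≤ b :=
    closure_norm_preimage_Ioo_subset a b hy
  have hfr {y : E} (hy : y ∈ frontier (norm ⁻¹' Set.Ioo a b)) : ‖y‖ = b ∨ ‖y‖ = a :=
    (norm_eq_or_norm_eq_of_mem_frontier hy).symm
  refine norm_mul_measureReal_ball_le (w := v - u) hd (isOpen_Ioo.preimage continuous_norm)
    (isBounded_norm_preimage_Ioo a b) (measure_frontier_norm_preimage_Ioo μ a b)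
    (fun y hy => (hv y (hcl hy).1 (hcl hy).2).sub (hu y (hcl hy).1 (hcl hy).2))
    (fun y hy => sub_eq_zero.2 (hval y (hfr hy))) (fun y hy => ?_) (fun y hy => ?_) hκ ⟨hxa, hxb⟩
  · have hy' := hcl (frontier_subset_closure hy)
    refine fderiv_sub_eq_zero_of_eq_on_sphere (norm_pos_iff.1 (ha.trans_le hy'.1))
      ((hu y hy'.1 hy'.2).differentiableAt (by simp))
      ((hv y hy'.1 hy'.2).differentiableAt (by simp))
      (fun z hz => hval z (by simpa [hz] using hfr hy)) (hrad y (hfr hy))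
  · have hu4 := hu y hy.1.le hy.2.le
    have hv4 := hv y hy.1.le hy.2.le
    have hΔ : Δ (v - u) =ᶠ[𝓝 y] Δ v - Δ u :=
      (hv4.of_le (by norm_num)).laplacian_sub_nhds (hu4.of_le (by norm_num))
    rw [(InnerProductSpace.laplacian_congr_nhds hΔ).eq_of_nhds,
      (contDiffAt_laplacian hv4 (by norm_num)).laplacian_sub
        (contDiffAt_laplacian hu4 (by norm_num)), hΔv y hy.1 hy.2, zero_sub, norm_neg]
    exact hC y hy.1 hy.2

theorem biharmonic_extension_away_from_zero_general (hd : Module.finrank ℝ E = 5) {u : E → F}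
    {ρ ε : ℝ} (hρ : 0 < ρ) (hε : 0 < ε) (hu : ∀ x, ‖x‖ ≤ ρ → ContDiffAt ℝ 4 u x) :
    ∀ᶠ η in 𝓝[>] (0 : ℝ), ∀ v : E → F,
      (∀ x, ρ * (1 - η) ≤ ‖x‖ → ‖x‖ ≤ ρ → ContDiffAt ℝ 4 v x) →
      (∀ x, ρ * (1 - η) < ‖x‖ → ‖x‖ < ρ → Δ (Δ v) x = 0) →
      (∀ x, ‖x‖ = ρ ∨ ‖x‖ = ρ * (1 - η) → v x = u x) →
      (∀ x, ‖x‖ = ρ ∨ ‖x‖ = ρ * (1 - η) →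
        fderiv ℝ v x (‖x‖⁻¹ • x) = fderiv ℝ u x (‖x‖⁻¹ • x)) →
      ∀ x, ρ * (1 - η) ≤ ‖x‖ → ‖x‖ ≤ ρ → ‖v x - u x‖ ≤ ε := by
  borelize E
  have : ProperSpace E := FiniteDimensional.proper_real E
  obtain ⟨C, hC⟩ := (isCompact_closedBall (0 : E) ρ).exists_bound_of_continuousOn
    (f := Δ (Δ u)) fun x hx => (contDiffAt_laplacian (m := 0) (n := 2) (contDiffAt_laplacian
      (hu x (by simpa using hx)) (by norm_num)) (by simp)).continuousAt.continuousWithinAt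
  have hC₀ : 0 ≤ C := (norm_nonneg _).trans (hC 0 (mem_closedBall_self hρ.le))
  set β := (volume : Measure E).real (ball 0 1)
  have hβ : 0 < β := ENNReal.toReal_pos (measure_ball_pos _ _ one_pos).ne' measure_ball_lt_top.ne
  set κ := ε * β / (4 * (C + 1)) with hκ_def
  have hκ : 0 < κ := by positivity
  filter_upwards [(tendsto_norm_preimage_Ioo_comap_measure volume hρ).eventually
      (eventually_forall_setIntegral_inv_norm_sub_le (hd.ge.trans' (by norm_num)) hκ),
    nhdsWithin_le_nhds (eventually_lt_nhds one_pos)] with η hη hη₁ v hv hΔv hval hrad x hxa hxb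
  by_cases hbdry : ‖x‖ = ρ ∨ ‖x‖ = ρ * (1 - η)
  · simpa [hval x hbdry] using hε.le
  rw [not_or] at hbdry
  have hbound : ‖v x - u x‖ * β ≤ 4 * (C * κ) :=
    norm_sub_mul_measureReal_ball_le_of_biharmonic_on_annulus hd (mul_pos hρ (sub_pos.2 hη₁))
      (fun y _ hy => hu y hy) hv hΔv hval hrad
      (fun y _ hy => hC y (mem_closedBall_zero_iff.2 hy.le)) hη (hxa.lt_of_ne' hbdry.2)
      (hxb.lt_of_ne hbdry.1)
  refine le_of_mul_le_mul_right (hbound.trans ?_) hβ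
  calc 4 * (C * κ) ≤ 4 * ((C + 1) * κ) := by gcongr; linarith
    _ = ε * β := by rw [hκ_def]; field_simp

end ThinAnnulus

/-- **Biharmonic extension across a thin annulus stays away from zero** (Lemma 4.1).
Let `u : ℝ⁵ → ℝ^{n+1}` be smooth on a neighborhood of the closed ball of radius `ρ` and
sphere-valued there. Then there is `η₁ > 0` such that for every `0 < η < η₁`, every map
`v` that is smooth on a neighborhood of the closed annulus
`A_η = {ρ(1-η) ≤ |x| ≤ ρ}`, is componentwise biharmonic on the open annulus, and agrees
with `u` together with its radial derivative on both boundary spheres, satisfies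
`|v| ≥ 1/2` on `A_η`. -/
theorem biharmonic_extension_away_from_zero (n : ℕ) (hn : 1 ≤ n) (ρ : ℝ) (hρ : 0 < ρ)
    (u : EuclideanSpace ℝ (Fin 5) → EuclideanSpace ℝ (Fin (n + 1)))
    (V : Set (EuclideanSpace ℝ (Fin 5))) (hV : IsOpen V)
    (hVball : Metric.closedBall (0 : EuclideanSpace ℝ (Fin 5)) ρ ⊆ V)
    (hu : ContDiffOn ℝ (⊤ : ℕ∞) u V)
    (husph : ∀ x : EuclideanSpace ℝ (Fin 5), ‖x‖ ≤ ρ → ‖u x‖ = 1) :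
    ∃ η₁ : ℝ, 0 < η₁ ∧
      ∀ η : ℝ, 0 < η → η < η₁ →
      ∀ v : EuclideanSpace ℝ (Fin 5) → EuclideanSpace ℝ (Fin (n + 1)),
      ∀ W : Set (EuclideanSpace ℝ (Fin 5)), IsOpen W →
        {x : EuclideanSpace ℝ (Fin 5) | ρ * (1 - η) ≤ ‖x‖ ∧ ‖x‖ ≤ ρ} ⊆ W →
        ContDiffOn ℝ (⊤ : ℕ∞) v W →
        (∀ x : EuclideanSpace ℝ (Fin 5),
          ρ * (1 - η) < ‖x‖ → ‖x‖ < ρ → lap (fun y => lap v y) x = 0) →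
        (∀ x : EuclideanSpace ℝ (Fin 5),
          ‖x‖ = ρ ∨ ‖x‖ = ρ * (1 - η) → v x = u x) →
        (∀ x : EuclideanSpace ℝ (Fin 5),
          ‖x‖ = ρ ∨ ‖x‖ = ρ * (1 - η) →
            fderiv ℝ v x (‖x‖⁻¹ • x) = fderiv ℝ u x (‖x‖⁻¹ • x)) →
        ∀ x : EuclideanSpace ℝ (Fin 5),
          ρ * (1 - η) ≤ ‖x‖ → ‖x‖ ≤ ρ → (1 / 2 : ℝ) ≤ ‖v x‖ := by
  have hu4 : ∀ x, ‖x‖ ≤ ρ → ContDiffAt ℝ 4 u x := fun x hx =>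
    contDiffAt_infty.1 (hu.contDiffAt (hV.mem_nhds (hVball (mem_closedBall_zero_iff.2 hx)))) 4
  obtain ⟨η₁, hη₁, hclose⟩ := (nhdsGT_basis 0).eventually_iff.1 <|
    biharmonic_extension_away_from_zero_general (by simp) hρ one_half_pos hu4
  refine ⟨η₁, hη₁, fun η hη₀ hη v W hW hAW hv hΔv hval hrad x hxa hxρ => ?_⟩
  have hv4 : ∀ y, ρ * (1 - η) ≤ ‖y‖ → ‖y‖ ≤ ρ → ContDiffAt ℝ 4 v y := fun y hya hyρ =>
    contDiffAt_infty.1 (hv.contDiffAt (hW.mem_nhds (hAW ⟨hya, hyρ⟩))) 4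
  have hdist : ‖v x - u x‖ ≤ 1 / 2 := hclose ⟨hη₀, hη⟩ v hv4
    (fun y hya hyρ => by rw [← lap_lap_eq_laplacian_laplacian (hv4 y hya.le hyρ.le), hΔv y hya hyρ])
    hval hrad x hxa hxρ
  linarith [norm_sub_norm_le (u x) (v x), norm_sub_rev (u x) (v x), husph x hxρ]
end
end

section
/- Let m ≥ 2 be an integer and ρ > 0, and let D = {x ∈ ℝ^m : 0 < x_m < ρ} be the open slab between the hyperplanes {x_m = 0} and {x_m = ρ}. Let w : ℝ^m → ℝ be bounded, smooth on an open neighborhood of the closure of D, and satisfy: (i) Δ(Δw) = 0 on D; (ii) w = 0 on {x_m = 0} ∪ {x_m = ρ}; (iii) ∂w/∂x_m = 0 on {x_m = 0} ∪ {x_m = ρ}; and (iv) ∫_D |Δw|² dx < ∞. Then w ≡ 0 on D. -/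
open MeasureTheory Filter Metric
open scoped ENNReal RealInnerProductSpace Topology

noncomputable section

/-!
On a box, Green's second identity tested with `η² w`, Green's first identity tested with `η w`, and
Poincaré's inequality across the slab bound `∫ η w²` by a constant times `R⁻² ∫ w²` whenever `η` is
a squared cutoff at scale `R`; the Cauchy data of `w` on the slab and the support of `η` kill all
boundary terms. Hence `N R = ∫ w²` over `{0 ≤ xₗ ≤ ρ, |xᵢ| ≤ R}` satisfies
`N R ≤ B R⁻² N (2 R)`. Iterating over dyadic scales, `N` would have to grow faster than every
power of `R` unless it vanishes, whereas a function of polynomial growth has `N` of polynomial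
growth.
-/

section PartialDerivatives

variable {m : ℕ} {f g h : EuclideanSpace ℝ (Fin m) → ℝ} {x : EuclideanSpace ℝ (Fin m)}

lemma contDiffAt_pderiv1 {n k : WithTop ℕ∞} (hf : ContDiffAt ℝ k f x) (hnk : n + 1 ≤ k)
    (i : Fin m) : ContDiffAt ℝ n (pderiv1 f i) x :=
  (hf.fderiv_right hnk).clm_apply contDiffAt_const

lemma contDiffAt_lap {n k : WithTop ℕ∞} (hf : ContDiffAt ℝ k f x) (hnk : n + 2 ≤ k) :
    ContDiffAt ℝ n (lap f) x :=
  ContDiffAt.sum fun i _ => contDiffAt_pderiv1 (n := n)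
    (contDiffAt_pderiv1 (n := n + 1) hf (by rwa [add_assoc, one_add_one_eq_two]) i) le_rfl i

lemma continuousAt_lap (hf : ContDiffAt ℝ 2 f x) : ContinuousAt (lap f) x :=
  (contDiffAt_lap (n := 0) hf (zero_add 2).le).continuousAt

lemma pderiv1_add (hf : DifferentiableAt ℝ f x) (hg : DifferentiableAt ℝ g x) (i : Fin m) :
    pderiv1 (fun y => f y + g y) i x = pderiv1 f i x + pderiv1 g i x := by
  simp [pderiv1, fderiv_fun_add hf hg]

lemma pderiv1_mul (hf : DifferentiableAt ℝ f x) (hg : DifferentiableAt ℝ g x) (i : Fin m) :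
    pderiv1 (fun y => f y * g y) i x = f x * pderiv1 g i x + g x * pderiv1 f i x := by
  simp [pderiv1, fderiv_fun_mul hf hg]

lemma pderiv1_sq (hf : DifferentiableAt ℝ f x) (i : Fin m) :
    pderiv1 (fun y => f y ^ 2) i x = 2 * f x * pderiv1 f i x := by
  simp [pderiv1, fderiv_fun_pow 2 hf, mul_assoc]

lemma pderiv1_sq_mul_eq_zero (hf : DifferentiableAt ℝ f x) (hg : DifferentiableAt ℝ g x)
    {i : Fin m} (h0 : f x * g x = 0) (h1 : f x * pderiv1 g i x = 0) :
    pderiv1 (fun y => f y ^ 2 * g y) i x = 0 := by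
  rw [pderiv1_mul (hf.fun_pow 2) hg, pderiv1_sq hf]
  linear_combination f x * h1 + 2 * pderiv1 f i x * h0

lemma pderiv1_coord_sub_const (i : Fin m) (c : ℝ) :
    pderiv1 (fun y : EuclideanSpace ℝ (Fin m) => y i - c) i x = 1 := by
  have hcoord : HasFDerivAt (fun y : EuclideanSpace ℝ (Fin m) => y i - c)
      (EuclideanSpace.proj i : EuclideanSpace ℝ (Fin m) →L[ℝ] ℝ) x :=
    (EuclideanSpace.proj i : EuclideanSpace ℝ (Fin m) →L[ℝ] ℝ).hasFDerivAt.sub_const c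
  simp [pderiv1, hcoord.fderiv]

lemma pderiv1_comp_smul (f : EuclideanSpace ℝ (Fin m) → ℝ) (r : ℝ) (i : Fin m)
    (x : EuclideanSpace ℝ (Fin m)) :
    pderiv1 (fun y => f (r • y)) i x = r * pderiv1 f i (r • x) := by
  simp [pderiv1, fderiv_comp_smul]

lemma pderiv1_const_mul (f : EuclideanSpace ℝ (Fin m) → ℝ) (c : ℝ) (i : Fin m)
    (x : EuclideanSpace ℝ (Fin m)) :
    pderiv1 (fun y => c * f y) i x = c * pderiv1 f i x := by
  simp [pderiv1, ← Pi.smul_def, ← smul_eq_mul, fderiv_const_smul_field]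

lemma lap_comp_smul (f : EuclideanSpace ℝ (Fin m) → ℝ) (r : ℝ) (x : EuclideanSpace ℝ (Fin m)) :
    lap (fun y => f (r • y)) x = r ^ 2 * lap f (r • x) := by
  simp only [lap, pderiv2, pderiv1_comp_smul, pderiv1_const_mul, Finset.mul_sum]
  refine Finset.sum_congr rfl fun i _ => ?_
  rw [← mul_assoc, ← sq]

/-- The pointwise inner product `∇f · ∇g` of gradients; `gradInner f f` is `|∇f|²`. -/
def gradInner (f g : EuclideanSpace ℝ (Fin m) → ℝ) (x : EuclideanSpace ℝ (Fin m)) : ℝ :=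
  ∑ i, pderiv1 f i x * pderiv1 g i x

lemma gradInner_comm (f g : EuclideanSpace ℝ (Fin m) → ℝ) (x : EuclideanSpace ℝ (Fin m)) :
    gradInner f g x = gradInner g f x := by
  simp only [gradInner, mul_comm]

lemma sq_pderiv1_le_gradInner_self (f : EuclideanSpace ℝ (Fin m) → ℝ) (i : Fin m)
    (x : EuclideanSpace ℝ (Fin m)) : pderiv1 f i x ^ 2 ≤ gradInner f f x := by
  rw [sq]
  exact Finset.single_le_sum (f := fun j => pderiv1 f j x * pderiv1 f j x)
    (fun j _ => mul_self_nonneg _) (Finset.mem_univ i)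

lemma gradInner_self_nonneg (f : EuclideanSpace ℝ (Fin m) → ℝ)
    (x : EuclideanSpace ℝ (Fin m)) : 0 ≤ gradInner f f x :=
  Finset.sum_nonneg fun _ _ => mul_self_nonneg _

lemma sq_gradInner_le (f g : EuclideanSpace ℝ (Fin m) → ℝ) (x : EuclideanSpace ℝ (Fin m)) :
    gradInner f g x ^ 2 ≤ gradInner f f x * gradInner g g x := by
  simpa only [gradInner, sq] using Finset.sum_mul_sq_le_sq_mul_sq Finset.univ
    (fun i => pderiv1 f i x) (fun i => pderiv1 g i x)

lemma gradInner_mul_left (hf : DifferentiableAt ℝ f x) (hg : DifferentiableAt ℝ g x) :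
    gradInner (fun y => f y * g y) h x = f x * gradInner g h x + g x * gradInner f h x := by
  simp only [gradInner, pderiv1_mul hf hg, Finset.mul_sum, ← Finset.sum_add_distrib]
  exact Finset.sum_congr rfl fun i _ => by ring

lemma gradInner_sq_left (hf : DifferentiableAt ℝ f x) :
    gradInner (fun y => f y ^ 2) g x = 2 * f x * gradInner f g x := by
  simp only [gradInner, pderiv1_sq hf, Finset.mul_sum, mul_assoc]

lemma gradInner_comp_smul_self (f : EuclideanSpace ℝ (Fin m) → ℝ) (r : ℝ)
    (x : EuclideanSpace ℝ (Fin m)) :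
    gradInner (fun y => f (r • y)) (fun y => f (r • y)) x = r ^ 2 * gradInner f f (r • x) := by
  simp only [gradInner, pderiv1_comp_smul, Finset.mul_sum]
  exact Finset.sum_congr rfl fun i _ => by ring

lemma continuousAt_gradInner (hf : ContDiffAt ℝ 1 f x) (hg : ContDiffAt ℝ 1 g x) :
    ContinuousAt (gradInner f g) x := by
  have hcont {u : EuclideanSpace ℝ (Fin m) → ℝ} (hu : ContDiffAt ℝ 1 u x) (i : Fin m) :
      ContinuousAt (pderiv1 u i) x :=
    (contDiffAt_pderiv1 (n := 0) hu (zero_add 1).le i).continuousAt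
  exact tendsto_finsetSum _ fun i _ => (hcont hf i).mul (hcont hg i)

lemma continuousOn_lap {s : Set (EuclideanSpace ℝ (Fin m))}
    (hf : ∀ x ∈ s, ContDiffAt ℝ 2 f x) : ContinuousOn (lap f) s :=
  fun x hx => (continuousAt_lap (hf x hx)).continuousWithinAt

lemma continuousOn_gradInner {s : Set (EuclideanSpace ℝ (Fin m))}
    (hf : ∀ x ∈ s, ContDiffAt ℝ 1 f x) (hg : ∀ x ∈ s, ContDiffAt ℝ 1 g x) :
    ContinuousOn (gradInner f g) s :=
  fun x hx => (continuousAt_gradInner (hf x hx) (hg x hx)).continuousWithinAt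

lemma sum_pderiv1_mul_pderiv1 (hf : DifferentiableAt ℝ f x) (hg : ContDiffAt ℝ 2 g x) :
    ∑ i, pderiv1 (fun y => f y * pderiv1 g i y) i x = gradInner f g x + f x * lap g x := by
  simp only [gradInner, lap, pderiv2, Finset.mul_sum, ← Finset.sum_add_distrib]
  refine Finset.sum_congr rfl fun i _ => ?_
  rw [pderiv1_mul hf ((contDiffAt_pderiv1 hg one_add_one_eq_two.le i).differentiableAt one_ne_zero)]
  ring

lemma lap_mul (hf : ContDiffAt ℝ 2 f x) (hg : ContDiffAt ℝ 2 g x) :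
    lap (fun y => f y * g y) x = f x * lap g x + 2 * gradInner f g x + g x * lap f x := by
  have hdiff {u : EuclideanSpace ℝ (Fin m) → ℝ} (hu : ContDiffAt ℝ 2 u x) :
      ∀ᶠ y in 𝓝 x, DifferentiableAt ℝ u y :=
    (hu.eventually (by simp)).mono fun y hy => hy.differentiableAt two_ne_zero
  have hdiff' {u v : EuclideanSpace ℝ (Fin m) → ℝ} (hu : ContDiffAt ℝ 2 u x)
      (hv : ContDiffAt ℝ 2 v x) (i : Fin m) :
      DifferentiableAt ℝ (fun y => u y * pderiv1 v i y) x :=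
    (hdiff hu).self_of_nhds.mul
      ((contDiffAt_pderiv1 hv one_add_one_eq_two.le i).differentiableAt one_ne_zero)
  have hpderiv2 (i : Fin m) : pderiv2 (fun y => f y * g y) i i x =
      pderiv1 (fun y => f y * pderiv1 g i y) i x + pderiv1 (fun y => g y * pderiv1 f i y) i x := by
    have hpderiv1 : pderiv1 (fun y => f y * g y) i =ᶠ[𝓝 x]
        fun y => f y * pderiv1 g i y + g y * pderiv1 f i y := by
      filter_upwards [hdiff hf, hdiff hg] with y hfy hgy using pderiv1_mul hfy hgy i
    rw [← pderiv1_add (hdiff' hf hg i) (hdiff' hg hf i), pderiv2, pderiv1, hpderiv1.fderiv_eq]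
    rfl
  calc lap (fun y => f y * g y) x
      = (∑ i, pderiv1 (fun y => f y * pderiv1 g i y) i x) +
          ∑ i, pderiv1 (fun y => g y * pderiv1 f i y) i x := by
        rw [← Finset.sum_add_distrib]
        exact Finset.sum_congr rfl fun i _ => hpderiv2 i
    _ = _ := by
        rw [sum_pderiv1_mul_pderiv1 (hdiff hf).self_of_nhds hg,
          sum_pderiv1_mul_pderiv1 (hdiff hg).self_of_nhds hf, gradInner_comm g f]
        ring

lemma lap_sq (hf : ContDiffAt ℝ 2 f x) :
    lap (fun y => f y ^ 2) x = 2 * (f x * lap f x + gradInner f f x) := by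
  simp only [sq, lap_mul hf hf]
  ring

lemma lap_sq_mul (hf : ContDiffAt ℝ 2 f x) (hg : ContDiffAt ℝ 2 g x) :
    lap (fun y => f y ^ 2 * g y) x = f x ^ 2 * lap g x + 4 * (f x * gradInner f g x) +
      2 * (g x * (f x * lap f x + gradInner f f x)) := by
  rw [lap_mul (hf.pow 2) hg, gradInner_sq_left (hf.differentiableAt two_ne_zero), lap_sq hf]
  ring

end PartialDerivatives

section Box

variable {m : ℕ} {a b : Fin m → ℝ} {f g u : EuclideanSpace ℝ (Fin m) → ℝ}

/-- The closed box `∏ᵢ [aᵢ, bᵢ]` in Euclidean space. -/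
def euclideanBox (a b : Fin m → ℝ) : Set (EuclideanSpace ℝ (Fin m)) :=
  {x | ∀ i, x i ∈ Set.Icc (a i) (b i)}

/-- The union of the two faces of `euclideanBox a b` orthogonal to the `i`-th coordinate axis. -/
def boxFace (a b : Fin m → ℝ) (i : Fin m) : Set (EuclideanSpace ℝ (Fin m)) :=
  {x | x ∈ euclideanBox a b ∧ (x i = a i ∨ x i = b i)}

lemma euclideanBox_eq_preimage (a b : Fin m → ℝ) :
    euclideanBox a b = (WithLp.ofLp : EuclideanSpace ℝ (Fin m) → Fin m → ℝ) ⁻¹' Set.Icc a b := by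
  ext x
  simp [euclideanBox, Pi.le_def, forall_and]

lemma isCompact_euclideanBox (a b : Fin m → ℝ) : IsCompact (euclideanBox a b) := by
  rw [euclideanBox_eq_preimage]
  exact (EuclideanSpace.equiv (Fin m) ℝ).toHomeomorph.isCompact_preimage.2 isCompact_Icc

lemma measureReal_euclideanBox (hab : a ≤ b) :
    volume.real (euclideanBox a b) = ∏ i, (b i - a i) := by
  rw [Measure.real, euclideanBox_eq_preimage,
    (PiLp.volume_preserving_ofLp (Fin m)).measure_preimage measurableSet_Icc.nullMeasurableSet,
    Real.volume_Icc_pi_toReal hab]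

lemma setIntegral_euclideanBox (a b : Fin m → ℝ) (g : EuclideanSpace ℝ (Fin m) → ℝ) :
    ∫ x in euclideanBox a b, g x = ∫ x in Set.Icc a b, g (WithLp.toLp 2 x) := by
  rw [euclideanBox_eq_preimage, ← (PiLp.volume_preserving_ofLp (Fin m)).setIntegral_preimage_emb
    (MeasurableEquiv.toLp 2 (Fin m → ℝ)).symm.measurableEmbedding]

lemma toLp_insertNth_mem_boxFace {n : ℕ} {a b : Fin (n + 1) → ℝ} (hab : a ≤ b) {j : Fin (n + 1)}
    {c : ℝ} (hc : c = a j ∨ c = b j) {x : Fin n → ℝ}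
    (hx : x ∈ Set.Icc (a ∘ j.succAbove) (b ∘ j.succAbove)) :
    WithLp.toLp 2 (j.insertNth c x : Fin (n + 1) → ℝ) ∈ boxFace a b j := by
  refine ⟨?_, by simpa⟩
  rw [euclideanBox_eq_preimage, Set.mem_preimage, Fin.insertNth_mem_Icc]
  refine ⟨?_, hx⟩
  rcases hc with rfl | rfl
  · exact Set.left_mem_Icc.2 (hab j)
  · exact Set.right_mem_Icc.2 (hab j)

theorem integral_sum_pderiv1_eq_zero (hab : a ≤ b) {F : Fin m → EuclideanSpace ℝ (Fin m) → ℝ}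
    (hF : ∀ i, ∀ x ∈ euclideanBox a b, ContDiffAt ℝ 1 (F i) x)
    (hF0 : ∀ i, ∀ x ∈ boxFace a b i, F i x = 0) :
    ∫ x in euclideanBox a b, ∑ i, pderiv1 (F i) i x = 0 := by
  obtain _ | n := m
  · simp
  let e : (Fin (n + 1) → ℝ) →L[ℝ] EuclideanSpace ℝ (Fin (n + 1)) :=
    (EuclideanSpace.equiv (Fin (n + 1)) ℝ).symm
  have hmem {x : Fin (n + 1) → ℝ} (hx : x ∈ Set.Icc a b) : e x ∈ euclideanBox a b := by
    rwa [euclideanBox_eq_preimage]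
  have hderiv (i : Fin (n + 1)) {x : Fin (n + 1) → ℝ} (hx : x ∈ Set.Icc a b) :
      HasFDerivAt (F i ∘ e) ((fderiv ℝ (F i) (e x)).comp e) x :=
    ((hF i _ (hmem hx)).differentiableAt one_ne_zero).hasFDerivAt.comp x e.hasFDerivAt
  have hcont : ContinuousOn (fun x => ∑ i, pderiv1 (F i) i (e x)) (Set.Icc a b) :=
    continuousOn_finsetSum _ fun i _ x hx =>
      ((contDiffAt_pderiv1 (n := 0) (hF i _ (hmem hx)) (zero_add 1).le i).continuousAt.comp
        e.continuous.continuousAt).continuousWithinAt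
  have hface (i : Fin (n + 1)) {c : ℝ} (hc : c = a i ∨ c = b i) :
      ∫ x in Set.Icc (a ∘ i.succAbove) (b ∘ i.succAbove), (F i ∘ e) (i.insertNth c x) = 0 :=
    setIntegral_eq_zero_of_forall_eq_zero fun x hx =>
      hF0 i _ (toLp_insertNth_mem_boxFace hab hc hx)
  have hdivergence := integral_divergence_of_hasFDerivAt_off_countable' a b hab
    (fun i => F i ∘ e) (fun i x => (fderiv ℝ (F i) (e x)).comp e) ∅ Set.countable_empty
    (fun i x hx => (hderiv i hx).continuousAt.continuousWithinAt)
    (fun x hx i => hderiv i ⟨fun j => (hx.1 j trivial).1.le, fun j => (hx.1 j trivial).2.le⟩)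
    (hcont.integrableOn_compact isCompact_Icc)
  simp only [hface _ (.inl rfl), hface _ (.inr rfl), sub_zero, Finset.sum_const_zero]
    at hdivergence
  rw [setIntegral_euclideanBox]
  exact hdivergence

theorem integral_pderiv1_eq_zero (hab : a ≤ b) {i : Fin m}
    (hg : ∀ x ∈ euclideanBox a b, ContDiffAt ℝ 1 g x) (hg0 : ∀ x ∈ boxFace a b i, g x = 0) :
    ∫ x in euclideanBox a b, pderiv1 g i x = 0 := by
  have hsum (x : EuclideanSpace ℝ (Fin m)) :
      ∑ j, pderiv1 (if j = i then g else 0) j x = pderiv1 g i x := by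
    rw [Finset.sum_eq_single i (fun j _ hj => by simp [hj, pderiv1]) (by simp), if_pos rfl]
  rw [← integral_sum_pderiv1_eq_zero hab (F := fun j => if j = i then g else 0)]
  · simp only [hsum]
  · intro j x hx
    split_ifs
    exacts [hg x hx, contDiffAt_const]
  · intro j x hx
    split_ifs with hj
    exacts [hg0 x (hj ▸ hx), rfl]

theorem integral_gradInner_add_mul_lap_eq_zero (hab : a ≤ b)
    (hu : ∀ x ∈ euclideanBox a b, ContDiffAt ℝ 1 u x)
    (hf : ∀ x ∈ euclideanBox a b, ContDiffAt ℝ 2 f x)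
    (h0 : ∀ i, ∀ x ∈ boxFace a b i, u x * pderiv1 f i x = 0) :
    ∫ x in euclideanBox a b, (gradInner u f x + u x * lap f x) = 0 := by
  rw [← integral_sum_pderiv1_eq_zero hab (F := fun i x => u x * pderiv1 f i x)
    (fun i x hx => (hu x hx).mul (contDiffAt_pderiv1 (hf x hx) one_add_one_eq_two.le i)) h0]
  exact setIntegral_congr_fun (isCompact_euclideanBox a b).measurableSet fun x hx =>
    (sum_pderiv1_mul_pderiv1 ((hu x hx).differentiableAt one_ne_zero) (hf x hx)).symm

theorem integral_mul_lap_sub_mul_lap_eq_zero (hab : a ≤ b)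
    (hu : ∀ x ∈ euclideanBox a b, ContDiffAt ℝ 2 u x)
    (hf : ∀ x ∈ euclideanBox a b, ContDiffAt ℝ 2 f x)
    (hu0 : ∀ i, ∀ x ∈ boxFace a b i, u x = 0)
    (hu1 : ∀ i, ∀ x ∈ boxFace a b i, pderiv1 u i x = 0) :
    ∫ x in euclideanBox a b, (f x * lap u x - u x * lap f x) = 0 := by
  have hgreen {u f : EuclideanSpace ℝ (Fin m) → ℝ}
      (hu : ∀ x ∈ euclideanBox a b, ContDiffAt ℝ 2 u x)
      (hf : ∀ x ∈ euclideanBox a b, ContDiffAt ℝ 2 f x) :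
      IntegrableOn (fun x => gradInner u f x + u x * lap f x) (euclideanBox a b) := by
    refine ContinuousOn.integrableOn_compact (isCompact_euclideanBox a b) fun x hx => ?_
    exact ((continuousAt_gradInner ((hu x hx).of_le one_le_two)
      ((hf x hx).of_le one_le_two)).add
        ((hu x hx).continuousAt.mul (continuousAt_lap (hf x hx)))).continuousWithinAt
  calc ∫ x in euclideanBox a b, (f x * lap u x - u x * lap f x)
      = ∫ x in euclideanBox a b,
          ((gradInner f u x + f x * lap u x) - (gradInner u f x + u x * lap f x)) := by
        simp only [gradInner_comm f u, add_sub_add_left_eq_sub]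
    _ = 0 := by
        rw [integral_sub (hgreen hf hu) (hgreen hu hf),
          integral_gradInner_add_mul_lap_eq_zero hab (fun x hx => (hf x hx).of_le one_le_two) hu
            fun i x hx => by rw [hu1 i x hx, mul_zero],
          integral_gradInner_add_mul_lap_eq_zero hab (fun x hx => (hu x hx).of_le one_le_two) hf
            fun i x hx => by rw [hu0 i x hx, zero_mul], sub_zero]

end Box

section WeightedEstimates

/-- A nonnegative `C²` weight `η` with `|∇η|² ≤ c η` and `|Δη| ≤ c`: the properties of a squared
cutoff function that are needed to absorb the terms in which derivatives fall on the weight. -/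
structure IsCutoffWeight {m : ℕ} (η : EuclideanSpace ℝ (Fin m) → ℝ) (c : ℝ) : Prop where
  contDiff : ContDiff ℝ 2 η
  nonneg : ∀ x, 0 ≤ η x
  gradInner_self_le : ∀ x, gradInner η η x ≤ c * η x
  abs_lap_le : ∀ x, |lap η x| ≤ c

lemma setIntegral_le_of_le_add_of_integral_eq_zero {X : Type*} [TopologicalSpace X] [T2Space X]
    [MeasurableSpace X] [OpensMeasurableSpace X] {μ : Measure X} [IsFiniteMeasureOnCompacts μ]
    {K : Set X} (hK : IsCompact K) {f g h z : X → ℝ} (hf : ContinuousOn f K)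
    (hg : ContinuousOn g K) (hh : ContinuousOn h K) (hz : ContinuousOn z K)
    (hz0 : ∫ x in K, z x ∂μ = 0) {p q r : ℝ}
    (hle : ∀ x ∈ K, f x ≤ p * g x + q * h x + r * z x) :
    ∫ x in K, f x ∂μ ≤ p * ∫ x in K, g x ∂μ + q * ∫ x in K, h x ∂μ := by
  have hint {u : X → ℝ} (hu : ContinuousOn u K) (s : ℝ) :
      IntegrableOn (fun x => s * u x) K μ := (hu.integrableOn_compact hK).const_mul s
  have hadd : IntegrableOn (fun x => p * g x + q * h x) K μ := (hint hg p).add (hint hh q)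
  calc ∫ x in K, f x ∂μ ≤ ∫ x in K, (p * g x + q * h x + r * z x) ∂μ :=
        setIntegral_mono_on (hf.integrableOn_compact hK)
          (hadd.add (hint hz r)) hK.measurableSet hle
    _ = p * ∫ x in K, g x ∂μ + q * ∫ x in K, h x ∂μ := by
        rw [integral_add hadd (hint hz r), integral_add (hint hg p) (hint hh q)]
        simp only [integral_const_mul, hz0, mul_zero, add_zero]

variable {m : ℕ} {a b : Fin m → ℝ} {η w : EuclideanSpace ℝ (Fin m) → ℝ} {c : ℝ}
  {x : EuclideanSpace ℝ (Fin m)}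

namespace IsCutoffWeight

lemma bound_nonneg (hη : IsCutoffWeight η c) : 0 ≤ c :=
  (abs_nonneg _).trans (hη.abs_lap_le 0)

lemma sq_gradInner_le_mul (hη : IsCutoffWeight η c) (w : EuclideanSpace ℝ (Fin m) → ℝ)
    (x : EuclideanSpace ℝ (Fin m)) :
    gradInner η w x ^ 2 ≤ c * η x * gradInner w w x :=
  (sq_gradInner_le η w x).trans
    (mul_le_mul_of_nonneg_right (hη.gradInner_self_le x) (gradInner_self_nonneg w x))

lemma sq_pderiv1_le (hη : IsCutoffWeight η c) (i : Fin m) (x : EuclideanSpace ℝ (Fin m)) :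
    pderiv1 η i x ^ 2 ≤ c * η x :=
  (sq_pderiv1_le_gradInner_self η i x).trans (hη.gradInner_self_le x)

lemma sq_mul_sq_lap_le_add_lap (hη : IsCutoffWeight η c) (hw : ContDiffAt ℝ 2 w x) :
    η x ^ 2 * lap w x ^ 2 ≤ 32 * c * (η x * gradInner w w x) + 32 * c ^ 2 * w x ^ 2 +
      2 * (lap w x * lap (fun y => η y ^ 2 * w y) x) := by
  have hc := hη.bound_nonneg
  have hηx := hη.nonneg x
  have hfirst : 2 * -(2 * η x * lap w x * gradInner η w x) ≤
      η x ^ 2 * lap w x ^ 2 / 4 + 16 * c * (η x * gradInner w w x) := by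
    have hww := gradInner_self_nonneg w x
    refine two_mul_le_add_of_sq_le_mul (by positivity) (by positivity) ?_
    have h := mul_le_mul_of_nonneg_left (hη.sq_gradInner_le_mul w x) (sq_nonneg (2 * η x * lap w x))
    linarith
  have hzeroth : 2 * -(lap w x * w x * (η x * lap η x + gradInner η η x)) ≤
      η x ^ 2 * lap w x ^ 2 / 4 + 16 * c ^ 2 * w x ^ 2 := by
    refine two_mul_le_add_of_sq_le_mul (by positivity) (by positivity) ?_
    have hle : (η x * lap η x + gradInner η η x) ^ 2 ≤ (2 * c * η x) ^ 2 := by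
      refine sq_le_sq' ?_ ?_ <;>
        nlinarith [abs_le.1 (hη.abs_lap_le x), hη.gradInner_self_le x, gradInner_self_nonneg η x]
    have h := mul_le_mul_of_nonneg_left hle (sq_nonneg (lap w x * w x))
    linarith
  rw [lap_sq_mul hη.contDiff.contDiffAt hw]
  linarith

lemma mul_sq_le_add_pderiv1 (hη : IsCutoffWeight η c) (hw : ContDiffAt ℝ 1 w x) {l : Fin m}
    {α β : ℝ} (hα : α ≤ x l) (hβ : x l ≤ β) :
    η x * w x ^ 2 ≤ 8 * (β - α) ^ 2 * (η x * gradInner w w x) + 2 * (β - α) ^ 2 * c * w x ^ 2 +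
      2 * pderiv1 (fun y => (y l - α) * (η y * w y ^ 2)) l x := by
  have hc := hη.bound_nonneg
  have hηx := hη.nonneg x
  have hwx : DifferentiableAt ℝ w x := hw.differentiableAt one_ne_zero
  have hηd : DifferentiableAt ℝ η x := hη.contDiff.contDiffAt.differentiableAt two_ne_zero
  have hcoord : DifferentiableAt ℝ (fun y : EuclideanSpace ℝ (Fin m) => y l - α) x :=
    (EuclideanSpace.proj l : EuclideanSpace ℝ (Fin m) →L[ℝ] ℝ).differentiableAt.sub_const α
  have hwidth : (x l - α) ^ 2 ≤ (β - α) ^ 2 :=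
    pow_le_pow_left₀ (sub_nonneg.2 hα) (sub_le_sub_right hβ α) 2
  have hweight : 2 * -((x l - α) * w x ^ 2 * pderiv1 η l x) ≤
      η x * w x ^ 2 / 2 + 2 * (β - α) ^ 2 * c * w x ^ 2 := by
    refine two_mul_le_add_of_sq_le_mul (by positivity) (by positivity) ?_
    calc (-((x l - α) * w x ^ 2 * pderiv1 η l x)) ^ 2
        = (x l - α) ^ 2 * pderiv1 η l x ^ 2 * (w x ^ 2) ^ 2 := by ring
      _ ≤ (β - α) ^ 2 * (c * η x) * (w x ^ 2) ^ 2 := by gcongr; exact hη.sq_pderiv1_le l x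
      _ = _ := by ring
  have hfunction : 2 * -(2 * (x l - α) * η x * w x * pderiv1 w l x) ≤
      η x * w x ^ 2 / 2 + 8 * (β - α) ^ 2 * (η x * gradInner w w x) := by
    have hww := gradInner_self_nonneg w x
    refine two_mul_le_add_of_sq_le_mul (by positivity) (by positivity) ?_
    calc (-(2 * (x l - α) * η x * w x * pderiv1 w l x)) ^ 2
        = 4 * (x l - α) ^ 2 * pderiv1 w l x ^ 2 * (η x * w x) ^ 2 := by ring
      _ ≤ 4 * (β - α) ^ 2 * gradInner w w x * (η x * w x) ^ 2 := by
        gcongr; exact sq_pderiv1_le_gradInner_self w l x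
      _ = _ := by ring
  rw [pderiv1_mul hcoord (hηd.fun_mul (hwx.fun_pow 2)), pderiv1_mul hηd (hwx.fun_pow 2),
    pderiv1_sq hwx, pderiv1_coord_sub_const]
  linarith

theorem integral_mul_gradInner_le (hη : IsCutoffWeight η c) (hab : a ≤ b)
    (hw : ∀ x ∈ euclideanBox a b, ContDiffAt ℝ 2 w x)
    (hdir : ∀ i, ∀ x ∈ boxFace a b i, η x * w x = 0) {θ : ℝ} (hθ : 0 < θ) :
    ∫ x in euclideanBox a b, η x * gradInner w w x ≤
      θ * (∫ x in euclideanBox a b, η x ^ 2 * lap w x ^ 2) +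
        (θ⁻¹ + c) * ∫ x in euclideanBox a b, w x ^ 2 := by
  have hη1 (x : EuclideanSpace ℝ (Fin m)) : ContDiffAt ℝ 1 η x :=
    hη.contDiff.contDiffAt.of_le one_le_two
  have hw1 (x) (hx : x ∈ euclideanBox a b) : ContDiffAt ℝ 1 w x := (hw x hx).of_le one_le_two
  have hηw (x) (hx : x ∈ euclideanBox a b) : ContDiffAt ℝ 1 (fun y => η y * w y) x :=
    (hη1 x).mul (hw1 x hx)
  have hηc : Continuous η := hη.contDiff.continuous
  have hwc : ContinuousOn w (euclideanBox a b) :=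
    fun x hx => (hw x hx).continuousAt.continuousWithinAt
  have hgrad := continuousOn_gradInner hw1 hw1
  have hgrad' := continuousOn_gradInner hηw hw1
  have hlap := continuousOn_lap hw
  refine setIntegral_le_of_le_add_of_integral_eq_zero (isCompact_euclideanBox a b)
    (by fun_prop) (by fun_prop) (by fun_prop) (by fun_prop)
    (integral_gradInner_add_mul_lap_eq_zero hab hηw hw fun i x hx => by
      rw [hdir i x hx, zero_mul]) (r := 2) fun x hx => ?_
  have hcross : 2 * -(w x * gradInner η w x) ≤ η x * gradInner w w x + c * w x ^ 2 :=
    two_mul_le_add_of_sq_le_mul (mul_nonneg (hη.nonneg x) (gradInner_self_nonneg w x))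
      (mul_nonneg hη.bound_nonneg (sq_nonneg _))
      (by nlinarith [mul_le_mul_of_nonneg_left (hη.sq_gradInner_le_mul w x) (sq_nonneg (w x))])
  have hyoung : 2 * -(η x * lap w x * w x) ≤ θ * (η x ^ 2 * lap w x ^ 2) + θ⁻¹ * w x ^ 2 :=
    two_mul_le_add_of_sq_le_mul (by positivity) (by positivity) (by field_simp; rfl)
  rw [gradInner_mul_left ((hη1 x).differentiableAt one_ne_zero)
    ((hw x hx).differentiableAt two_ne_zero)]
  linarith

/- The test function `η² w` and its first derivatives vanish on the boundary of the box, so Green's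
second identity gives `∫ Δw Δ(η² w) = ∫ η² w Δ²w = 0`. -/
theorem integral_sq_mul_sq_lap_le (hη : IsCutoffWeight η c) (hab : a ≤ b)
    (hw : ∀ x ∈ euclideanBox a b, ContDiffAt ℝ 4 w x)
    (hbih : ∀ x ∈ euclideanBox a b, (∀ i, x ∉ boxFace a b i) → lap (lap w) x = 0)
    (hdir : ∀ i, ∀ x ∈ boxFace a b i, η x * w x = 0)
    (hneu : ∀ i, ∀ x ∈ boxFace a b i, η x * pderiv1 w i x = 0) :
    ∫ x in euclideanBox a b, η x ^ 2 * lap w x ^ 2 ≤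
      32 * c * (∫ x in euclideanBox a b, η x * gradInner w w x) +
        32 * c ^ 2 * ∫ x in euclideanBox a b, w x ^ 2 := by
  have hw2 (x) (hx : x ∈ euclideanBox a b) : ContDiffAt ℝ 2 w x := (hw x hx).of_le (by norm_num)
  have hw1 (x) (hx : x ∈ euclideanBox a b) : ContDiffAt ℝ 1 w x := (hw2 x hx).of_le one_le_two
  have hlapw (x) (hx : x ∈ euclideanBox a b) : ContDiffAt ℝ 2 (lap w) x :=
    contDiffAt_lap (hw x hx) (by norm_num)
  have hu (x) (hx : x ∈ euclideanBox a b) : ContDiffAt ℝ 2 (fun y => η y ^ 2 * w y) x :=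
    (hη.contDiff.contDiffAt.pow 2).mul (hw2 x hx)
  have hηc : Continuous η := hη.contDiff.continuous
  have hwc : ContinuousOn w (euclideanBox a b) :=
    fun x hx => (hw x hx).continuousAt.continuousWithinAt
  have hlap := continuousOn_lap hw2
  have hlapu := continuousOn_lap hu
  have hbilap := continuousOn_lap hlapw
  have hgrad := continuousOn_gradInner hw1 hw1
  refine setIntegral_le_of_le_add_of_integral_eq_zero (isCompact_euclideanBox a b)
    (by fun_prop) (by fun_prop) (by fun_prop) (by fun_prop)
    (integral_mul_lap_sub_mul_lap_eq_zero hab hu hlapw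
      (fun i x hx => by simp only [sq, mul_assoc, hdir i x hx, mul_zero])
      fun i x hx => pderiv1_sq_mul_eq_zero (hη.contDiff.contDiffAt.differentiableAt two_ne_zero)
        ((hw2 x hx.1).differentiableAt two_ne_zero) (hdir i x hx) (hneu i x hx))
    (r := 2) fun x hx => ?_
  have hbih' : η x ^ 2 * w x * lap (lap w) x = 0 := by
    by_cases hface : ∃ i, x ∈ boxFace a b i
    · obtain ⟨i, hi⟩ := hface
      rw [sq, mul_assoc (η x), hdir i x hi, mul_zero, zero_mul]
    · rw [hbih x hx (not_exists.1 hface), mul_zero]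
  rw [hbih', sub_zero]
  linarith [hη.sq_mul_sq_lap_le_add_lap (hw2 x hx)]

theorem integral_mul_gradInner_le_integral_sq (hη : IsCutoffWeight η c) (hc : 0 < c) (hab : a ≤ b)
    (hw : ∀ x ∈ euclideanBox a b, ContDiffAt ℝ 4 w x)
    (hbih : ∀ x ∈ euclideanBox a b, (∀ i, x ∉ boxFace a b i) → lap (lap w) x = 0)
    (hdir : ∀ i, ∀ x ∈ boxFace a b i, η x * w x = 0)
    (hneu : ∀ i, ∀ x ∈ boxFace a b i, η x * pderiv1 w i x = 0) :
    ∫ x in euclideanBox a b, η x * gradInner w w x ≤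
      131 * c * ∫ x in euclideanBox a b, w x ^ 2 := by
  have hgrad := hη.integral_mul_gradInner_le hab (fun x hx => (hw x hx).of_le (by norm_num)) hdir
    (inv_pos.2 (mul_pos (by norm_num : (0 : ℝ) < 64) hc))
  have hlap := mul_le_mul_of_nonneg_left (hη.integral_sq_mul_sq_lap_le hab hw hbih hdir hneu)
    (inv_nonneg.2 (mul_nonneg (by norm_num : (0 : ℝ) ≤ 64) hc.le))
  have habsorb (G W : ℝ) : (64 * c)⁻¹ * (32 * c * G + 32 * c ^ 2 * W) = G / 2 + c / 2 * W := by
    field_simp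
    ring
  rw [inv_inv] at hgrad
  rw [habsorb] at hlap
  linarith

/- Poincaré's inequality across the box: integrate `∂ₗ ((xₗ - aₗ) η w²)`. -/
theorem integral_mul_sq_le_gradInner (hη : IsCutoffWeight η c) (hab : a ≤ b)
    (hw : ∀ x ∈ euclideanBox a b, ContDiffAt ℝ 1 w x) {l : Fin m}
    (hdir : ∀ x ∈ boxFace a b l, η x * w x = 0) :
    ∫ x in euclideanBox a b, η x * w x ^ 2 ≤
      8 * (b l - a l) ^ 2 * (∫ x in euclideanBox a b, η x * gradInner w w x) +
        2 * (b l - a l) ^ 2 * c * ∫ x in euclideanBox a b, w x ^ 2 := by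
  have hη1 (x : EuclideanSpace ℝ (Fin m)) : ContDiffAt ℝ 1 η x :=
    hη.contDiff.contDiffAt.of_le one_le_two
  have hfield (x) (hx : x ∈ euclideanBox a b) :
      ContDiffAt ℝ 1 (fun y => (y l - a l) * (η y * w y ^ 2)) x :=
    ((EuclideanSpace.proj l : EuclideanSpace ℝ (Fin m) →L[ℝ] ℝ).contDiff.contDiffAt.sub
      contDiffAt_const).mul ((hη1 x).mul ((hw x hx).pow 2))
  have hηc : Continuous η := hη.contDiff.continuous
  have hwc : ContinuousOn w (euclideanBox a b) :=
    fun x hx => (hw x hx).continuousAt.continuousWithinAt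
  have hgrad := continuousOn_gradInner hw hw
  have hfieldc : ContinuousOn (pderiv1 (fun y => (y l - a l) * (η y * w y ^ 2)) l)
      (euclideanBox a b) := fun x hx => (contDiffAt_pderiv1 (n := 0) (hfield x hx)
        (zero_add 1).le l).continuousAt.continuousWithinAt
  exact setIntegral_le_of_le_add_of_integral_eq_zero (isCompact_euclideanBox a b)
    (by fun_prop) (by fun_prop) (by fun_prop) (by fun_prop)
    (integral_pderiv1_eq_zero hab hfield fun x hx => by
      rw [sq, ← mul_assoc (η x), hdir x hx, zero_mul, mul_zero])
    (r := 2) fun x hx => hη.mul_sq_le_add_pderiv1 (hw x hx) (hx l).1 (hx l).2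

theorem integral_mul_sq_le_of_biharmonic (hη : IsCutoffWeight η c) (hc : 0 < c) (hab : a ≤ b)
    (hw : ∀ x ∈ euclideanBox a b, ContDiffAt ℝ 4 w x)
    (hbih : ∀ x ∈ euclideanBox a b, (∀ i, x ∉ boxFace a b i) → lap (lap w) x = 0)
    (hdir : ∀ i, ∀ x ∈ boxFace a b i, η x * w x = 0)
    (hneu : ∀ i, ∀ x ∈ boxFace a b i, η x * pderiv1 w i x = 0) (l : Fin m) :
    ∫ x in euclideanBox a b, η x * w x ^ 2 ≤
      1050 * (b l - a l) ^ 2 * c * ∫ x in euclideanBox a b, w x ^ 2 := by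
  have hpoincare := hη.integral_mul_sq_le_gradInner hab
    (fun x hx => (hw x hx).of_le (by norm_num)) (hdir l)
  have hgrad := mul_le_mul_of_nonneg_left
    (hη.integral_mul_gradInner_le_integral_sq hc hab hw hbih hdir hneu)
    (by positivity : 0 ≤ 8 * (b l - a l) ^ 2)
  linarith

end IsCutoffWeight

end WeightedEstimates

section Cutoff

variable {m : ℕ} {η : EuclideanSpace ℝ (Fin m) → ℝ} {c : ℝ}

lemma IsCutoffWeight.comp_smul (hη : IsCutoffWeight η c) (r : ℝ) :
    IsCutoffWeight (fun x => η (r • x)) (r ^ 2 * c) where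
  contDiff := hη.contDiff.comp (contDiff_const_smul r)
  nonneg x := hη.nonneg _
  gradInner_self_le x := by
    rw [gradInner_comp_smul_self, mul_assoc]
    exact mul_le_mul_of_nonneg_left (hη.gradInner_self_le _) (sq_nonneg r)
  abs_lap_le x := by
    rw [lap_comp_smul, abs_mul, abs_sq]
    exact mul_le_mul_of_nonneg_left (hη.abs_lap_le _) (sq_nonneg r)

lemma pderiv1_eq_zero_of_notMem_tsupport {f : EuclideanSpace ℝ (Fin m) → ℝ}
    {x : EuclideanSpace ℝ (Fin m)} (hx : x ∉ tsupport f) (i : Fin m) : pderiv1 f i x = 0 :=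
  image_eq_zero_of_notMem_tsupport fun h => hx (tsupport_fderiv_apply_subset ℝ _ h)

lemma hasCompactSupport_gradInner {f : EuclideanSpace ℝ (Fin m) → ℝ} (hf : HasCompactSupport f)
    (g : EuclideanSpace ℝ (Fin m) → ℝ) : HasCompactSupport (gradInner f g) :=
  .intro hf fun x hx => Finset.sum_eq_zero fun i _ => by
    rw [pderiv1_eq_zero_of_notMem_tsupport hx i, zero_mul]

lemma hasCompactSupport_lap {f : EuclideanSpace ℝ (Fin m) → ℝ} (hf : HasCompactSupport f) :
    HasCompactSupport (lap f) :=
  .intro hf fun _ hx => Finset.sum_eq_zero fun i _ =>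
    pderiv1_eq_zero_of_notMem_tsupport (fun h => hx (tsupport_fderiv_apply_subset ℝ _ h)) i

lemma exists_isCutoffWeight_sq (hη : ContDiff ℝ 2 η) (hsupp : HasCompactSupport η) :
    ∃ c > 0, IsCutoffWeight (fun x => η x ^ 2) c := by
  obtain ⟨A, hA⟩ := (continuous_iff_continuousAt.2 fun x => continuousAt_gradInner
    (hη.contDiffAt.of_le one_le_two)
    (hη.contDiffAt.of_le one_le_two)).bounded_above_of_compact_support
      (hasCompactSupport_gradInner hsupp η)
  obtain ⟨B, hB⟩ := (continuous_iff_continuousAt.2 fun x => continuousAt_lap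
    (hη.contDiffAt.pow 2)).bounded_above_of_compact_support
      (hasCompactSupport_lap (hsupp.comp_left (g := (· ^ 2)) (zero_pow two_ne_zero)))
  have hA0 : 0 ≤ A := (norm_nonneg _).trans (hA 0)
  have hB0 : 0 ≤ B := (norm_nonneg _).trans (hB 0)
  refine ⟨4 * A + B + 1, by positivity, hη.pow 2, fun x => sq_nonneg _, fun x => ?_,
    fun x => (hB x).trans (by linarith)⟩
  have hηx : DifferentiableAt ℝ η x := hη.contDiffAt.differentiableAt two_ne_zero
  rw [gradInner_sq_left hηx, gradInner_comm, gradInner_sq_left hηx]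
  nlinarith [mul_le_mul_of_nonneg_right (le_of_abs_le (hA x)) (sq_nonneg (η x)),
    mul_nonneg hB0 (sq_nonneg (η x)), sq_nonneg (η x)]

lemma exists_isCutoffWeight (m : ℕ) : ∃ C > 0, ∀ R > 0, ∃ η : EuclideanSpace ℝ (Fin m) → ℝ,
    IsCutoffWeight η (C / R ^ 2) ∧ (∀ x, (∀ i, |x i| ≤ R) → η x = 1) ∧
      ∀ x i, 2 * R ≤ |x i| → η x = 0 := by
  let φ : ContDiffBump (0 : Fin m → ℝ) := ⟨1, 2, one_pos, one_lt_two⟩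
  let e : EuclideanSpace ℝ (Fin m) ≃L[ℝ] (Fin m → ℝ) := EuclideanSpace.equiv (Fin m) ℝ
  obtain ⟨C, hC, hη⟩ := exists_isCutoffWeight_sq (η := fun x => φ (e x))
    (φ.contDiff.comp e.contDiff) (φ.hasCompactSupport.comp_homeomorph e.toHomeomorph)
  refine ⟨C, hC, fun R hR => ⟨fun x => φ (e (R⁻¹ • x)) ^ 2, ?_, fun x hx => ?_, fun x i hx => ?_⟩⟩
  · simpa only [inv_pow, inv_mul_eq_div] using hη.comp_smul R⁻¹
  · refine (congrArg (· ^ 2) (φ.one_of_mem_closedBall ?_)).trans (one_pow 2)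
    rw [mem_closedBall_zero_iff, map_smul, norm_smul, norm_inv, Real.norm_of_nonneg hR.le,
      inv_mul_le_one₀ hR]
    exact (pi_norm_le_iff_of_nonneg hR.le).2 hx
  · refine (congrArg (· ^ 2) (φ.zero_of_le_dist ?_)).trans (zero_pow two_ne_zero)
    rw [dist_zero_right, map_smul, norm_smul, norm_inv, Real.norm_of_nonneg hR.le,
      le_inv_mul_iff₀ hR, mul_comm]
    exact hx.trans (norm_le_pi_norm (e x) i)

end Cutoff

lemma nonpos_of_le_mul_two_mul {N : ℝ → ℝ} {θ C R₀ : ℝ} {k : ℕ} (hR₀ : 0 ≤ R₀) (hθ : 0 ≤ θ)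
    (hθk : θ * 2 ^ k < 1) (hdouble : ∀ R ≥ R₀, N R ≤ θ * N (2 * R))
    (hgrowth : ∀ R ≥ R₀, N R ≤ C * R ^ k) {R : ℝ} (hR : R₀ ≤ R) : N R ≤ 0 := by
  have hlarge (n : ℕ) : R₀ ≤ 2 ^ n * R :=
    hR.trans (le_mul_of_one_le_left (hR₀.trans hR) (one_le_pow₀ one_le_two))
  have hiterate (n : ℕ) : N R ≤ θ ^ n * N (2 ^ n * R) := by
    induction n with
    | zero => simp
    | succ n ih =>
      calc N R ≤ θ ^ n * N (2 ^ n * R) := ih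
        _ ≤ θ ^ n * (θ * N (2 * (2 ^ n * R))) := by gcongr; exact hdouble _ (hlarge n)
        _ = θ ^ (n + 1) * N (2 ^ (n + 1) * R) := by rw [pow_succ, mul_assoc, pow_succ', mul_assoc]
  have hgeometric (n : ℕ) : N R ≤ C * R ^ k * (θ * 2 ^ k) ^ n :=
    calc N R ≤ θ ^ n * N (2 ^ n * R) := hiterate n
      _ ≤ θ ^ n * (C * (2 ^ n * R) ^ k) := by gcongr; exact hgrowth _ (hlarge n)
      _ = C * R ^ k * (θ * 2 ^ k) ^ n := by ring
  have hlim := (tendsto_pow_atTop_nhds_zero_of_lt_one (by positivity) hθk).const_mul (C * R ^ k)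
  rw [mul_zero] at hlim
  exact ge_of_tendsto' hlim hgeometric

lemma eq_zero_of_setIntegral_sq_nonpos {X : Type*} [TopologicalSpace X] [T2Space X]
    [MeasurableSpace X] [OpensMeasurableSpace X] {μ : Measure X} [IsFiniteMeasureOnCompacts μ]
    [μ.IsOpenPosMeasure] {K : Set X} (hK : IsCompact K) {f : X → ℝ} (hf : ContinuousOn f K)
    (hf0 : ∫ x in K, f x ^ 2 ∂μ ≤ 0) {x : X} (hx : K ∈ 𝓝 x) : f x = 0 := by
  have hzero : ∫ x in K, f x ^ 2 ∂μ = 0 := hf0.antisymm (integral_nonneg fun x => sq_nonneg _)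
  have hae := (setIntegral_eq_zero_iff_of_nonneg_ae (Eventually.of_forall fun y => sq_nonneg (f y))
    ((hf.pow 2).integrableOn_compact hK)).1 hzero
  have heq : Set.EqOn (fun y => f y ^ 2) 0 (interior K) := Measure.eqOn_open_of_ae_eq
    (ae_restrict_of_ae_restrict_of_subset interior_subset hae) isOpen_interior
    ((hf.pow 2).mono interior_subset) continuousOn_const
  exact (pow_eq_zero_iff two_ne_zero).1 (heq (mem_interior_iff_mem_nhds.2 hx))

section Slab

variable {m : ℕ} {l : Fin m} {ρ R : ℝ} {w : EuclideanSpace ℝ (Fin m) → ℝ}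
  {x : EuclideanSpace ℝ (Fin m)}

/-- The truncated slab `{0 ≤ xₗ ≤ ρ, |xᵢ| ≤ R for i ≠ l}`, as a box so that the energy estimates
apply to it. -/
def slabBox (l : Fin m) (ρ R : ℝ) : Set (EuclideanSpace ℝ (Fin m)) :=
  euclideanBox (Function.update (fun _ => -R) l 0) (Function.update (fun _ => R) l ρ)

lemma mem_slabBox : x ∈ slabBox l ρ R ↔ x l ∈ Set.Icc 0 ρ ∧ ∀ i ≠ l, |x i| ≤ R := by
  rw [slabBox, euclideanBox, Set.mem_ofPred_eq, ← and_forall_ne l]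
  exact and_congr (by simp) (forall₂_congr fun i hi => by simp [hi, abs_le])

lemma update_neg_le_update (hρ : 0 ≤ ρ) (hR : 0 ≤ R) :
    Function.update (fun _ : Fin m => -R) l 0 ≤ Function.update (fun _ => R) l ρ :=
  update_le_update_iff.2 ⟨hρ, fun _ _ => neg_le_self hR⟩

lemma isCompact_slabBox (l : Fin m) (ρ R : ℝ) : IsCompact (slabBox l ρ R) :=
  isCompact_euclideanBox _ _

lemma slabBox_subset_slabBox {R' : ℝ} (h : R ≤ R') : slabBox l ρ R ⊆ slabBox l ρ R' :=
  fun _ hx => mem_slabBox.2 ⟨(mem_slabBox.1 hx).1, fun i hi => ((mem_slabBox.1 hx).2 i hi).trans h⟩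

lemma slabBox_mem_nhds (hx0 : 0 < x l) (hxρ : x l < ρ) (hR : ∀ i ≠ l, |x i| < R) :
    slabBox l ρ R ∈ 𝓝 x := by
  have hcoord (i : Fin m) : ContinuousAt (fun y : EuclideanSpace ℝ (Fin m) => y i) x :=
    (EuclideanSpace.proj i : EuclideanSpace ℝ (Fin m) →L[ℝ] ℝ).continuous.continuousAt
  have hother : ∀ᶠ y in 𝓝 x, ∀ i ≠ l, |y i| ≤ R :=
    eventually_all.2 fun i => eventually_imp_distrib_left.2 fun hi =>
      (hcoord i).abs.eventually (ge_mem_nhds (hR i hi))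
  filter_upwards [hother, (hcoord l).eventually (Icc_mem_nhds hx0 hxρ)] with y hy hyl
  exact mem_slabBox.2 ⟨hyl, hy⟩

lemma abs_apply_le_of_mem_slabBox (hρR : ρ ≤ R) (hx : x ∈ slabBox l ρ R) (i : Fin m) :
    |x i| ≤ R := by
  obtain ⟨hl, hother⟩ := mem_slabBox.1 hx
  by_cases hi : i = l
  · rw [hi, abs_of_nonneg hl.1]
    exact hl.2.trans hρR
  · exact hother i hi

lemma norm_le_of_mem_slabBox (hρR : ρ ≤ R) (hx : x ∈ slabBox l ρ R) : ‖x‖ ≤ √m * R := by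
  have hxi := abs_apply_le_of_mem_slabBox hρR hx
  have hR : 0 ≤ R := (abs_nonneg _).trans (hxi l)
  rw [EuclideanSpace.norm_eq, ← Real.sqrt_sq hR, ← Real.sqrt_mul m.cast_nonneg]
  refine Real.sqrt_le_sqrt ?_
  calc ∑ i, ‖x i‖ ^ 2 ≤ ∑ _i : Fin m, R ^ 2 := by gcongr with i; exact hxi i
    _ = m * R ^ 2 := by simp

lemma measureReal_slabBox_le (hρ : 0 ≤ ρ) (hρR : ρ ≤ R) :
    volume.real (slabBox l ρ R) ≤ (2 * R) ^ m := by
  have hle := update_neg_le_update (l := l) hρ (hρ.trans hρR)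
  rw [slabBox, measureReal_euclideanBox hle]
  calc ∏ i, (Function.update (fun _ => R) l ρ i - Function.update (fun _ => -R) l 0 i)
      ≤ ∏ _i : Fin m, 2 * R := by
        refine Finset.prod_le_prod (fun i _ => sub_nonneg.2 (hle i)) fun i _ => ?_
        by_cases hi : i = l
        · subst hi
          simp only [Function.update_self]
          linarith
        · simp only [Function.update_of_ne hi]
          linarith
    _ = (2 * R) ^ m := by simp

theorem exists_integral_sq_slabBox_le_pow (hρ : 0 ≤ ρ) {M : ℝ} {k : ℕ}
    (hgrowth : ∀ x, x l ∈ Set.Icc 0 ρ → |w x| ≤ M * (1 + ‖x‖) ^ k) :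
    ∃ C, ∀ R ≥ max ρ 1, ∫ x in slabBox l ρ R, w x ^ 2 ≤ C * R ^ (2 * k + m) := by
  refine ⟨M ^ 2 * (1 + √m) ^ (2 * k) * 2 ^ m, fun R hR => ?_⟩
  have hρR : ρ ≤ R := (le_max_left _ _).trans hR
  have hR1 : 1 ≤ R := (le_max_right _ _).trans hR
  have hbound (x) (hx : x ∈ slabBox l ρ R) :
      ‖w x ^ 2‖ ≤ M ^ 2 * ((1 + √m) * R) ^ (2 * k) :=
    calc ‖w x ^ 2‖ = |w x| ^ 2 := norm_pow _ _
      _ ≤ (M * (1 + ‖x‖) ^ k) ^ 2 :=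
        pow_le_pow_left₀ (abs_nonneg _) (hgrowth x (mem_slabBox.1 hx).1) 2
      _ = M ^ 2 * (1 + ‖x‖) ^ (2 * k) := by ring
      _ ≤ M ^ 2 * ((1 + √m) * R) ^ (2 * k) := by
        gcongr
        linarith [norm_le_of_mem_slabBox hρR hx]
  calc ∫ x in slabBox l ρ R, w x ^ 2 ≤ ‖∫ x in slabBox l ρ R, w x ^ 2‖ := Real.le_norm_self _
    _ ≤ M ^ 2 * ((1 + √m) * R) ^ (2 * k) * volume.real (slabBox l ρ R) :=
      norm_setIntegral_le_of_norm_le_const (isCompact_slabBox l ρ R).measure_lt_top hbound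
    _ ≤ M ^ 2 * ((1 + √m) * R) ^ (2 * k) * (2 * R) ^ m := by
      gcongr
      exact measureReal_slabBox_le hρ hρR
    _ = M ^ 2 * (1 + √m) ^ (2 * k) * 2 ^ m * R ^ (2 * k + m) := by
      rw [mul_pow, mul_pow, pow_add]
      ring

lemma mem_boxFace_slab {i : Fin m} (hx : x ∈ boxFace (Function.update (fun _ => -R) l 0)
    (Function.update (fun _ => R) l ρ) i) :
    (i = l ∧ (x l = 0 ∨ x l = ρ)) ∨ i ≠ l ∧ (x i = -R ∨ x i = R) := by
  rcases eq_or_ne i l with rfl | hi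
  · exact .inl ⟨rfl, by simpa using hx.2⟩
  · exact .inr ⟨hi, by simpa [hi] using hx.2⟩

lemma IsCutoffWeight.integral_mul_sq_slabBox_le {η : EuclideanSpace ℝ (Fin m) → ℝ} {c : ℝ}
    (hη : IsCutoffWeight η c) (hc : 0 < c) (hρ : 0 ≤ ρ) (hR : 0 ≤ R)
    (hη0 : ∀ x, ∀ i ≠ l, |x i| = R → η x = 0)
    (hw : ∀ x, x l ∈ Set.Icc 0 ρ → ContDiffAt ℝ 4 w x)
    (hbih : ∀ x, 0 < x l → x l < ρ → lap (lap w) x = 0)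
    (hdir : ∀ x, x l = 0 ∨ x l = ρ → w x = 0)
    (hneu : ∀ x, x l = 0 ∨ x l = ρ → pderiv1 w l x = 0) :
    ∫ x in slabBox l ρ R, η x * w x ^ 2 ≤
      1050 * ρ ^ 2 * c * ∫ x in slabBox l ρ R, w x ^ 2 := by
  have hinterior (x) (hx : x ∈ slabBox l ρ R) (hface : x ∉ boxFace
      (Function.update (fun _ => -R) l 0) (Function.update (fun _ => R) l ρ) l) :
      0 < x l ∧ x l < ρ := by
    have hends : ¬(x l = 0 ∨ x l = ρ) := fun h => hface ⟨hx, by simpa using h⟩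
    have hl := (mem_slabBox.1 hx).1
    exact ⟨hl.1.lt_of_ne' fun h => hends (.inl h), hl.2.lt_of_ne fun h => hends (.inr h)⟩
  have henergy := hη.integral_mul_sq_le_of_biharmonic hc (update_neg_le_update (l := l) hρ hR)
    (fun x hx => hw x (mem_slabBox.1 hx).1)
    (fun x hx hface => (hinterior x hx (hface l)).elim (hbih x)) (fun i x hx => ?_)
    (fun i x hx => ?_) l
  · simpa only [slabBox, Function.update_self, sub_zero] using henergy
  · rcases mem_boxFace_slab hx with ⟨-, hxl⟩ | ⟨hi, hxi⟩
    · rw [hdir x hxl, mul_zero]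
    · rw [hη0 x i hi ((abs_eq hR).2 hxi.symm), zero_mul]
  · rcases mem_boxFace_slab hx with ⟨rfl, hxl⟩ | ⟨hi, hxi⟩
    · rw [hneu x hxl, mul_zero]
    · rw [hη0 x i hi ((abs_eq hR).2 hxi.symm), zero_mul]

theorem exists_integral_sq_slabBox_le (hρ : 0 < ρ)
    (hw : ∀ x, x l ∈ Set.Icc 0 ρ → ContDiffAt ℝ 4 w x)
    (hbih : ∀ x, 0 < x l → x l < ρ → lap (lap w) x = 0)
    (hdir : ∀ x, x l = 0 ∨ x l = ρ → w x = 0)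
    (hneu : ∀ x, x l = 0 ∨ x l = ρ → pderiv1 w l x = 0) :
    ∃ B ≥ 0, ∀ R ≥ ρ, ∫ x in slabBox l ρ R, w x ^ 2 ≤
      B / R ^ 2 * ∫ x in slabBox l ρ (2 * R), w x ^ 2 := by
  obtain ⟨C, hC, hcutoff⟩ := exists_isCutoffWeight m
  refine ⟨1050 * ρ ^ 2 * C, by positivity, fun R hR => ?_⟩
  have hR0 : 0 < R := hρ.trans_le hR
  obtain ⟨η, hη, hη1, hη0⟩ := hcutoff R hR0
  have hint : IntegrableOn (fun x => η x * w x ^ 2) (slabBox l ρ (2 * R)) :=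
    ContinuousOn.integrableOn_compact (isCompact_slabBox l ρ (2 * R)) fun x hx =>
      (hη.contDiff.continuous.continuousAt.mul
        ((hw x (mem_slabBox.1 hx).1).continuousAt.pow 2)).continuousWithinAt
  calc ∫ x in slabBox l ρ R, w x ^ 2 = ∫ x in slabBox l ρ R, η x * w x ^ 2 :=
        setIntegral_congr_fun (isCompact_slabBox l ρ R).measurableSet fun x hx => by
          simp only [hη1 x (abs_apply_le_of_mem_slabBox hR hx), one_mul]
    _ ≤ ∫ x in slabBox l ρ (2 * R), η x * w x ^ 2 :=
        setIntegral_mono_set hint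
          (Eventually.of_forall fun x => mul_nonneg (hη.nonneg x) (sq_nonneg _))
          (slabBox_subset_slabBox (by linarith)).eventuallyLE
    _ ≤ 1050 * ρ ^ 2 * (C / R ^ 2) * ∫ x in slabBox l ρ (2 * R), w x ^ 2 :=
        hη.integral_mul_sq_slabBox_le (by positivity) hρ.le (by positivity)
          (fun x i _ hxi => hη0 x i hxi.ge) hw hbih hdir hneu
    _ = 1050 * ρ ^ 2 * C / R ^ 2 * ∫ x in slabBox l ρ (2 * R), w x ^ 2 := by rw [mul_div_assoc]

lemma mem_closure_slab (hρ : 0 < ρ) (hx : x l ∈ Set.Icc 0 ρ) :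
    x ∈ closure {y : EuclideanSpace ℝ (Fin m) | 0 < y l ∧ y l < ρ} := by
  have hsurj : Function.Surjective (EuclideanSpace.proj l : EuclideanSpace ℝ (Fin m) →L[ℝ] ℝ) :=
    fun t => ⟨EuclideanSpace.single l t, by simp⟩
  have hclosure := ((EuclideanSpace.proj l : EuclideanSpace ℝ (Fin m) →L[ℝ] ℝ).isOpenMap
    hsurj).preimage_closure_eq_closure_preimage (ContinuousLinearMap.continuous _) (Set.Ioo 0 ρ)
  rw [closure_Ioo hρ.ne] at hclosure
  exact hclosure.subset hx

theorem slab_biharmonic_vanishes_general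
    (hw : ∀ x, x l ∈ Set.Icc 0 ρ → ContDiffAt ℝ 4 w x) {M : ℝ} {k : ℕ}
    (hgrowth : ∀ x, x l ∈ Set.Icc 0 ρ → |w x| ≤ M * (1 + ‖x‖) ^ k)
    (hbih : ∀ x, 0 < x l → x l < ρ → lap (lap w) x = 0)
    (hdir : ∀ x, x l = 0 ∨ x l = ρ → w x = 0)
    (hneu : ∀ x, x l = 0 ∨ x l = ρ → pderiv1 w l x = 0) (hx0 : 0 < x l) (hxρ : x l < ρ) :
    w x = 0 := by
  have hρ : 0 < ρ := hx0.trans hxρ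
  obtain ⟨C, hC⟩ := exists_integral_sq_slabBox_le_pow hρ.le hgrowth
  obtain ⟨B, hB, hdouble⟩ := exists_integral_sq_slabBox_le hρ hw hbih hdir hneu
  have hlim : Tendsto (fun R : ℝ => B / R ^ 2 * 2 ^ (2 * k + m)) atTop (𝓝 0) := by
    simpa using (tendsto_const_nhds.div_atTop
      (tendsto_pow_atTop two_ne_zero)).mul_const ((2 : ℝ) ^ (2 * k + m))
  obtain ⟨R₀, hsmall, hρR₀, hxR₀⟩ := ((hlim.eventually_lt_const one_pos).and
    ((eventually_ge_atTop (max ρ 1)).and (eventually_gt_atTop ‖x‖))).exists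
  have hR₀ : 0 < R₀ := (norm_nonneg x).trans_lt hxR₀
  refine eq_zero_of_setIntegral_sq_nonpos (μ := volume) (isCompact_slabBox l ρ R₀)
    (fun y hy => (hw y (mem_slabBox.1 hy).1).continuousAt.continuousWithinAt) ?_
    (slabBox_mem_nhds hx0 hxρ fun i _ => (PiLp.norm_apply_le x i).trans_lt hxR₀)
  refine nonpos_of_le_mul_two_mul (N := fun R => ∫ y in slabBox l ρ R, w y ^ 2) hR₀.le
    (by positivity) hsmall (fun R hR => ?_) (fun R hR => hC R (hρR₀.trans hR)) le_rfl
  refine (hdouble R (((le_max_left _ _).trans hρR₀).trans hR)).trans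
    (mul_le_mul_of_nonneg_right ?_ (integral_nonneg fun y => sq_nonneg _))
  gcongr

end Slab

/-- **Biharmonic functions on a slab with zero Cauchy data vanish** (from the proof of
Lemma 4.1). Let `D = {0 < x_m < ρ}` be the open slab in `ℝ^m` (with `lastIdx` the index
of the last coordinate). If `w` is bounded, smooth on a neighborhood of the closure of
`D`, biharmonic on `D`, has vanishing Dirichlet and Neumann data on both boundary
hyperplanes, and `∫_D |Δw|² < ∞`, then `w ≡ 0` on `D`. -/
theorem slab_biharmonic_vanishes (m : ℕ) (hm : 2 ≤ m) (ρ : ℝ) (hρ : 0 < ρ)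
    (lastIdx : Fin m) (hlast : (lastIdx : ℕ) = m - 1)
    (w : EuclideanSpace ℝ (Fin m) → ℝ)
    (M : ℝ) (hbd : ∀ x, |w x| ≤ M)
    (V : Set (EuclideanSpace ℝ (Fin m))) (hV : IsOpen V)
    (hVD : closure {x : EuclideanSpace ℝ (Fin m) | 0 < x lastIdx ∧ x lastIdx < ρ} ⊆ V)
    (hsm : ContDiffOn ℝ (⊤ : ℕ∞) w V)
    (hbih : ∀ x : EuclideanSpace ℝ (Fin m),
      0 < x lastIdx → x lastIdx < ρ → lap (fun y => lap w y) x = 0)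
    (hdir : ∀ x : EuclideanSpace ℝ (Fin m),
      x lastIdx = 0 ∨ x lastIdx = ρ → w x = 0)
    (hneu : ∀ x : EuclideanSpace ℝ (Fin m),
      x lastIdx = 0 ∨ x lastIdx = ρ → pderiv1 w lastIdx x = 0)
    (hfin : ∫⁻ x in {x : EuclideanSpace ℝ (Fin m) | 0 < x lastIdx ∧ x lastIdx < ρ},
      ENNReal.ofReal ((lap w x) ^ 2) < ⊤) :
    ∀ x : EuclideanSpace ℝ (Fin m), 0 < x lastIdx → x lastIdx < ρ → w x = 0 := by
  have hw (y : EuclideanSpace ℝ (Fin m)) (hy : y lastIdx ∈ Set.Icc 0 ρ) : ContDiffAt ℝ 4 w y :=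
    contDiffAt_infty.1 (hsm.contDiffAt (hV.mem_nhds (hVD (mem_closure_slab hρ hy)))) 4
  exact fun x => slab_biharmonic_vanishes_general hw (k := 0) (fun y _ => by simpa using hbd y)
    hbih hdir hneu
end
end
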